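/- arXiv:1703.05531 — 11 statements merged into one kernel-verified Lean document; each statement's English description precedes it below -/
import Mathlib

section
/- Let A be a finite or infinite matrix (of size u×v with u,v ∈ ℕ ∪ {ω}) with entries from ℚ, each row having only finitely many nonzero entries. If A is image partition regular, then I(A) is a left ideal of the semigroup (βℕ,·); that is, I(A) ≠ ∅ and for every p ∈ βℕ and every q ∈ I(A), p·q ∈ I(A). -/
/- `ℕ+` plays the role of the paper's `ℕ = {1,2,3,…}`.  `Ultrafilter ℕ+` is `βℕ`. -/

/-- Product of ultrafilters: `U ∈ umul p q ↔ {x | {y | x*y ∈ U} ∈ q} ∈ p`. -/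
def umul (p q : Ultrafilter ℕ+) : Ultrafilter ℕ+ :=
  p.bind fun x => q.map fun y => x * y

/-- Sum of ultrafilters: `U ∈ uadd p q ↔ {x | {y | x+y ∈ U} ∈ q} ∈ p`. -/
def uadd (p q : Ultrafilter ℕ+) : Ultrafilter ℕ+ :=
  p.bind fun x => q.map fun y => x + y

/-- The matrix-vector product `Ax` (computed in `ℚ`) of a row-finite matrix `A`
with a vector `x` of positive integers. -/
noncomputable def mulVecQ {ι κ : Type} (A : ι → κ → ℚ) (x : κ → ℕ+) : ι → ℚ :=
  fun i => ∑ᶠ j, A i j * ((x j : ℕ) : ℚ)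

/-- All entries of the vector `y` are (positive) natural numbers lying in `P`. -/
def entriesIn {ι : Type} (y : ι → ℚ) (P : Set ℕ+) : Prop :=
  ∀ i, ∃ n ∈ P, y i = ((n : ℕ) : ℚ)

/-- `A` is image partition regular: for every finite coloring of `ℕ` there is
a vector `x` over `ℕ` all entries of whose image `Ax` are monochromatic. -/
def IPR {ι κ : Type} (A : ι → κ → ℚ) : Prop :=
  ∀ (r : ℕ) (c : ℕ+ → Fin r), ∃ (k : Fin r) (x : κ → ℕ+),
    entriesIn (mulVecQ A x) {n | c n = k}

/-- `I(A) = {p ∈ βℕ : for every P ∈ p there is x over ℕ with all entries of Ax in P}`. -/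
def ISet {ι κ : Type} (A : ι → κ → ℚ) : Set (Ultrafilter ℕ+) :=
  {p | ∀ P ∈ p, ∃ x : κ → ℕ+, entriesIn (mulVecQ A x) P}

/-- Lemma 2.3(a): if the (finite or infinite) row-finite matrix `A`
with rational entries is image partition regular, then `I(A)` is a left ideal of
`(βℕ,·)`: it is nonempty and `p·q ∈ I(A)` whenever `p ∈ βℕ` and `q ∈ I(A)`. -/
theorem stmt_0 {ι κ : Type} (A : ι → κ → ℚ)
    (hrow : ∀ i, {j | A i j ≠ 0}.Finite) (hA : IPR A) :
    (ISet A).Nonempty ∧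
      ∀ (p : Ultrafilter ℕ+), ∀ q ∈ ISet A, umul p q ∈ ISet A := by
  constructor
  · have hne : (Filter.generate {T : Set ℕ+ | ¬ ∃ x : κ → ℕ+, entriesIn (mulVecQ A x) Tᶜ}).NeBot := by
      rw [Filter.generate_neBot_iff]
      intro t ht htf
      by_contra hempty
      have hc : ∀ n : ℕ+, ∃ T : t, n ∉ (T : Set ℕ+) := by
        intro n
        by_contra hn
        push Not at hn
        exact hempty ⟨n, fun T hT => hn ⟨T, hT⟩⟩
      choose c hc using hc
      have := htf.to_subtype
      obtain ⟨r, ⟨e⟩⟩ := Finite.exists_equiv_fin t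
      obtain ⟨k, x, hx⟩ := hA r (fun n => e (c n))
      apply ht (e.symm k).2
      refine ⟨x, fun i => ?_⟩
      obtain ⟨n, hn, h⟩ := hx i
      refine ⟨n, ?_, h⟩
      have hn' : e (c n) = k := hn
      rw [← hn', Equiv.symm_apply_apply]
      exact hc n
    refine ⟨Ultrafilter.of
        (Filter.generate {T : Set ℕ+ | ¬ ∃ x : κ → ℕ+, entriesIn (mulVecQ A x) Tᶜ}), fun P hP => ?_⟩
    by_contra hbad
    have h1 : Pᶜ ∈ Ultrafilter.of
        (Filter.generate {T : Set ℕ+ | ¬ ∃ x : κ → ℕ+, entriesIn (mulVecQ A x) Tᶜ}) := by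
      apply Ultrafilter.of_le
      apply Filter.mem_generate_of_mem
      simpa using hbad
    exact (Ultrafilter.compl_mem_iff_notMem.1 h1) hP
  · intro p q hq P hP
    have hP' : {a : ℕ+ | {y : ℕ+ | a * y ∈ P} ∈ q} ∈ p := hP
    obtain ⟨a, ha⟩ := Ultrafilter.nonempty_of_mem hP'
    obtain ⟨x, hx⟩ := hq _ ha
    refine ⟨fun j => a * x j, fun i => ?_⟩
    obtain ⟨n, hn, h⟩ := hx i
    refine ⟨a * n, hn, ?_⟩
    rw [PNat.mul_coe, Nat.cast_mul, ← h]
    unfold mulVecQ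
    rw [mul_finsum]
    apply finsum_congr
    intro j
    push_cast
    ring
end

section
/- Let A be a u×v matrix with u,v ∈ ℕ and entries from ℚ. If A is image partition regular, then I(A) is a two-sided ideal of the semigroup (βℕ,·); that is, I(A) ≠ ∅ and for every p ∈ βℕ and every q ∈ I(A), both p·q ∈ I(A) and q·p ∈ I(A). -/
theorem mem_umul_iff (p q : Ultrafilter ℕ+) (P : Set ℕ+) :
    P ∈ umul p q ↔ {x | {y | x * y ∈ P} ∈ q} ∈ p := Iff.rfl

theorem mulVecQ_scale {u v : ℕ} (A : Fin u → Fin v → ℚ) (x : Fin v → ℕ+) (a : ℕ+) (i : Fin u) :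
    mulVecQ A (fun j => a * x j) i = ((a : ℕ) : ℚ) * mulVecQ A x i := by
  unfold mulVecQ
  rw [finsum_eq_sum_of_fintype, finsum_eq_sum_of_fintype, Finset.mul_sum]
  refine Finset.sum_congr rfl fun j _ => ?_
  push_cast
  ring

theorem entriesIn_mono {ι : Type} {y : ι → ℚ} {P Q : Set ℕ+} (h : entriesIn y P) (hPQ : P ⊆ Q) :
    entriesIn y Q := fun i => by
  obtain ⟨n, hn, e⟩ := h i
  exact ⟨n, hPQ hn, e⟩

theorem ISet_nonempty {u v : ℕ} (A : Fin u → Fin v → ℚ) (hA : IPR A) : (ISet A).Nonempty := by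
  classical
  let S : Set (Set ℕ+) := {B | ¬ ∃ x, entriesIn (mulVecQ A x) Bᶜ}
  have hne : (Filter.generate S).NeBot := by
    rw [Filter.generate_neBot_iff]
    intro t htS htf
    by_contra hcon
    rw [Set.not_nonempty_iff_eq_empty] at hcon
    have hex : ∀ n : ℕ+, ∃ B : t, n ∉ (B : Set ℕ+) := by
      intro n
      by_contra! h
      have : n ∈ ⋂₀ t := fun B hB => h ⟨B, hB⟩
      rw [hcon] at this
      exact this
    choose c hc using hex
    haveI : Finite t := htf
    obtain ⟨r, ⟨e⟩⟩ := Finite.exists_equiv_fin t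
    obtain ⟨k, x, hx⟩ := hA r (fun n => e (c n))
    refine htS (e.symm k).2 ⟨x, entriesIn_mono hx ?_⟩
    intro n hn
    have : c n = e.symm k := by
      rw [← (show e (c n) = k from hn), Equiv.symm_apply_apply]
    rw [← this]
    exact hc n
  refine ⟨Ultrafilter.of (Filter.generate S), fun P hP => ?_⟩
  by_contra h
  have h1 : Pᶜ ∈ Filter.generate S := Filter.mem_generate_of_mem (by
    change ¬ ∃ x, entriesIn (mulVecQ A x) Pᶜᶜ
    rwa [compl_compl])
  have h2 : Pᶜ ∈ Ultrafilter.of (Filter.generate S) := Ultrafilter.of_le _ h1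
  exact Ultrafilter.compl_notMem_iff.2 hP h2

/-- Lemma 2.3(b): if the finite `u×v` matrix `A` with rational
entries is image partition regular, then `I(A)` is a two-sided ideal of `(βℕ,·)`. -/
theorem stmt_1 {u v : ℕ} (A : Fin u → Fin v → ℚ) (hA : IPR A) :
    (ISet A).Nonempty ∧
      (∀ (p : Ultrafilter ℕ+), ∀ q ∈ ISet A, umul p q ∈ ISet A) ∧
      (∀ (p : Ultrafilter ℕ+), ∀ q ∈ ISet A, umul q p ∈ ISet A) := by
  refine ⟨ISet_nonempty A hA, ?_, ?_⟩
  · intro p q hq P hP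
    rw [mem_umul_iff] at hP
    obtain ⟨a, ha⟩ := Ultrafilter.nonempty_of_mem hP
    obtain ⟨x, hx⟩ := hq _ ha
    refine ⟨fun j => a * x j, fun i => ?_⟩
    obtain ⟨n, hn, e⟩ := hx i
    refine ⟨a * n, hn, ?_⟩
    rw [mulVecQ_scale, e]
    push_cast
    ring
  · intro p q hq P hP
    rw [mem_umul_iff] at hP
    obtain ⟨x, hx⟩ := hq _ hP
    choose n hn e using hx
    have hall : (⋂ i, {y | n i * y ∈ P}) ∈ (p : Filter ℕ+) := Filter.iInter_mem.2 hn
    obtain ⟨a, ha⟩ := Ultrafilter.nonempty_of_mem hall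
    rw [Set.mem_iInter] at ha
    refine ⟨fun j => a * x j, fun i => ⟨n i * a, ha i, ?_⟩⟩
    rw [mulVecQ_scale, e]
    push_cast
    ring
end

section
/- Let A be a finite (u×v with u,v ∈ ℕ) kernel partition regular matrix with entries from ℚ. Then J(A) is a subsemigroup of (βℕ,+); that is, J(A) ≠ ∅ and for all p,q ∈ J(A), p+q ∈ J(A). -/
/-- `A` is kernel partition regular: for every finite coloring of `ℕ` there is a
monochromatic vector `x` with `Ax = 0`. -/
def KPR {ι κ : Type} (A : ι → κ → ℚ) : Prop :=
  ∀ (r : ℕ) (c : ℕ+ → Fin r), ∃ (k : Fin r) (x : κ → ℕ+),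
    (∀ j, c (x j) = k) ∧ ∀ i, ∑ᶠ j, A i j * ((x j : ℕ) : ℚ) = 0

/-- `J(A) = {p ∈ βℕ : for every P ∈ p there is x with all entries in P and Ax = 0}`. -/
def JSet {ι κ : Type} (A : ι → κ → ℚ) : Set (Ultrafilter ℕ+) :=
  {p | ∀ P ∈ p, ∃ x : κ → ℕ+,
    (∀ j, x j ∈ P) ∧ ∀ i, ∑ᶠ j, A i j * ((x j : ℕ) : ℚ) = 0}

/-- Lemma 2.7(b): if the finite `u×v` matrix `A` with rational
entries is kernel partition regular, then `J(A)` is a subsemigroup of `(βℕ,+)`. -/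
theorem stmt_5 {u v : ℕ} (A : Fin u → Fin v → ℚ) (hA : KPR A) :
    (JSet A).Nonempty ∧ ∀ p ∈ JSet A, ∀ q ∈ JSet A, uadd p q ∈ JSet A := by
  constructor
  · have key : ∃ F : Ultrafilter ℕ+, {t : Set ℕ+ | ¬ ∃ x : Fin v → ℕ+,
        (∀ j, x j ∈ tᶜ) ∧ ∀ i, ∑ᶠ j, A i j * ((x j : ℕ) : ℚ) = 0} ⊆ F.sets := by
      apply Ultrafilter.exists_ultrafilter_of_finite_inter_nonempty
      intro T hT
      by_contra hne
      have h : ∀ n : ℕ+, ∃ t : T, n ∉ (t : Set ℕ+) := by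
        intro n
        by_contra hn
        push Not at hn
        exact hne ⟨n, fun t ht => hn ⟨t, ht⟩⟩
      choose f hf using h
      obtain ⟨k, x, hx, hs⟩ := hA _ (fun n => T.equivFin (f n))
      refine hT (T.equivFin.symm k).2 ⟨x, fun j => ?_, hs⟩
      have h2 : T.equivFin.symm k = f (x j) := by
        rw [← hx j, Equiv.symm_apply_apply]
      rw [h2]
      exact hf (x j)
    obtain ⟨F, hF⟩ := key
    refine ⟨F, fun P hP => ?_⟩
    by_contra hc
    have hm : Pᶜ ∈ F := hF (by simpa only [Set.mem_setOf_eq, compl_compl] using hc)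
    exact Ultrafilter.compl_mem_iff_notMem.mp hm hP
  · intro p hp q hq P hP
    have hP' : {x : ℕ+ | {y : ℕ+ | x + y ∈ P} ∈ q} ∈ p := hP
    obtain ⟨x, hx, hxs⟩ := hp _ hP'
    have hI : (⋂ j, {y : ℕ+ | x j + y ∈ P}) ∈ (q : Filter ℕ+) :=
      Filter.iInter_mem.mpr hx
    obtain ⟨y, hy, hys⟩ := hq _ hI
    refine ⟨fun j => x j + y j, fun j => Set.mem_iInter.mp (hy j) j, fun i => ?_⟩
    have h1 := hxs i
    have h2 := hys i
    rw [finsum_eq_sum_of_fintype] at h1 h2 ⊢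
    simp only [PNat.add_coe, Nat.cast_add, mul_add, Finset.sum_add_distrib, h1, h2, add_zero]
end

section
/- Let A be a finite or infinite matrix with entries from ℚ, each row having only finitely many nonzero entries. If A is kernel partition regular, then J(A) is a left ideal of the semigroup (βℕ,·); that is, J(A) ≠ ∅ and for every p ∈ βℕ and every q ∈ J(A), p·q ∈ J(A). -/
/-- Lemma 2.8(a): if the (finite or infinite) row-finite matrix `A`
with rational entries is kernel partition regular, then `J(A)` is a left ideal of
`(βℕ,·)`. -/
theorem stmt_6 {ι κ : Type} (A : ι → κ → ℚ)
    (hrow : ∀ i, {j | A i j ≠ 0}.Finite) (hA : KPR A) :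
    (JSet A).Nonempty ∧
      ∀ (p : Ultrafilter ℕ+), ∀ q ∈ JSet A, umul p q ∈ JSet A := by
  constructor
  · obtain ⟨F, hF⟩ := Ultrafilter.exists_ultrafilter_of_finite_inter_nonempty
      {s : Set ℕ+ | ¬ ∃ x : κ → ℕ+, (∀ j, x j ∈ sᶜ) ∧
        ∀ i, ∑ᶠ j, A i j * ((x j : ℕ) : ℚ) = 0} (by
        intro T hT
        by_contra hne
        have h1 : ∀ n : ℕ+, ∃ t : T, n ∉ t.1 := by
          intro n
          by_contra hn
          push Not at hn
          exact hne ⟨n, fun t ht => hn ⟨t, ht⟩⟩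
        choose f hf using h1
        obtain ⟨k, x, hx, hs⟩ := hA _ (fun n => T.equivFin (f n))
        refine hT (T.equivFin.symm k).2 ⟨x, fun j => ?_, hs⟩
        have h2 : f (x j) = T.equivFin.symm k := by
          rw [← hx j, Equiv.symm_apply_apply]
        rw [← h2]
        exact hf (x j))
    refine ⟨F, fun P hP => ?_⟩
    by_contra hbad
    have h3 : Pᶜ ∈ F := hF (by
      simp only [Set.mem_ofPred_eq, compl_compl]
      exact hbad)
    exact Ultrafilter.compl_notMem_iff.mpr hP h3
  · intro p q hq P hP
    have h1 : {a : ℕ+ | {y : ℕ+ | a * y ∈ P} ∈ q} ∈ p := hP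
    obtain ⟨a, ha⟩ := p.nonempty_of_mem h1
    obtain ⟨x, hx, hs⟩ := hq _ ha
    refine ⟨fun j => a * x j, hx, fun i => ?_⟩
    have h2 : ∀ j, A i j * ((a * x j : ℕ+) : ℕ) = ((a : ℕ) : ℚ) * (A i j * ((x j : ℕ) : ℚ)) := by
      intro j
      push_cast
      ring
    simp only [h2]
    rw [← mul_finsum, hs i, mul_zero]
end

section
/- Let A be a finite (u×v with u,v ∈ ℕ) kernel partition regular matrix with entries from ℚ. Then J(A) is a two-sided ideal of the semigroup (βℕ,·); that is, J(A) ≠ ∅ and for every p ∈ βℕ and every q ∈ J(A), both p·q ∈ J(A) and q·p ∈ J(A). -/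
theorem umul_mem_aux {p q : Ultrafilter ℕ+} {P : Set ℕ+} (h : P ∈ umul p q) :
    {x | {y | x * y ∈ P} ∈ q} ∈ p := h

theorem scale_aux {u v : ℕ} (A : Fin u → Fin v → ℚ) (x z : Fin v → ℕ+) (a : ℕ+)
    (hz : ∀ j, z j = a * x j)
    (hx : ∀ i, ∑ᶠ j, A i j * ((x j : ℕ) : ℚ) = 0) :
    ∀ i, ∑ᶠ j, A i j * ((z j : ℕ) : ℚ) = 0 := by
  intro i
  have h := hx i
  rw [finsum_eq_sum_of_fintype] at h ⊢
  have : ∑ j, A i j * ((z j : ℕ) : ℚ) = ((a : ℕ) : ℚ) * ∑ j, A i j * ((x j : ℕ) : ℚ) := by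
    rw [Finset.mul_sum]
    refine Finset.sum_congr rfl fun j _ => ?_
    rw [hz j]
    push_cast
    ring
  rw [this, h, mul_zero]

theorem nonempty_aux {u v : ℕ} (A : Fin u → Fin v → ℚ) (hA : KPR A) : (JSet A).Nonempty := by
  by_contra hne
  have h1 : ∀ p : Ultrafilter ℕ+, ∃ P ∈ p, ¬ ∃ x : Fin v → ℕ+,
      (∀ j, x j ∈ P) ∧ ∀ i, ∑ᶠ j, A i j * ((x j : ℕ) : ℚ) = 0 := by
    intro p
    by_contra hp
    push Not at hp
    exact hne ⟨p, fun P hP => hp P hP⟩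
  choose S hS hS' using h1
  obtain ⟨t, -, ht⟩ := isCompact_univ.elim_nhds_subcover
    (fun p : Ultrafilter ℕ+ => {q : Ultrafilter ℕ+ | S p ∈ q})
    (fun p _ => (ultrafilter_isOpen_basic (S p)).mem_nhds (hS p))
  have h2 : ∀ n : ℕ+, ∃ p : t, n ∈ S p := by
    intro n
    have := ht (Set.mem_univ (pure n : Ultrafilter ℕ+))
    simp only [Set.mem_iUnion] at this
    obtain ⟨p, hp, h⟩ := this
    exact ⟨⟨p, hp⟩, h⟩
  choose f hf using h2
  obtain ⟨k, x, hx, hx0⟩ := hA t.card (fun n => t.equivFin (f n))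
  refine hS' (t.equivFin.symm k) ⟨x, fun j => ?_, hx0⟩
  rw [← hx j, Equiv.symm_apply_apply]
  exact hf _

/-- Lemma 2.8(b): if the finite `u×v` matrix `A` with rational
entries is kernel partition regular, then `J(A)` is a two-sided ideal of `(βℕ,·)`. -/
theorem stmt_7 {u v : ℕ} (A : Fin u → Fin v → ℚ) (hA : KPR A) :
    (JSet A).Nonempty ∧
      (∀ (p : Ultrafilter ℕ+), ∀ q ∈ JSet A, umul p q ∈ JSet A) ∧
      (∀ (p : Ultrafilter ℕ+), ∀ q ∈ JSet A, umul q p ∈ JSet A) := by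
  refine ⟨nonempty_aux A hA, fun p q hq P hP => ?_, fun p q hq P hP => ?_⟩
  · obtain ⟨a, ha⟩ := p.nonempty_of_mem (umul_mem_aux hP)
    obtain ⟨x, hx, hx0⟩ := hq _ ha
    exact ⟨fun j => a * x j, hx, scale_aux A x _ a (fun _ => rfl) hx0⟩
  · obtain ⟨x, hx, hx0⟩ := hq _ (umul_mem_aux hP)
    have h : (⋂ j, {y | x j * y ∈ P}) ∈ (p : Filter ℕ+) :=
      Filter.iInter_mem.2 fun j => hx j
    obtain ⟨a, ha⟩ := p.nonempty_of_mem h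
    rw [Set.mem_iInter] at ha
    exact ⟨fun j => x j * a, ha, scale_aux A x _ a (fun _ => mul_comm _ _) hx0⟩
end

section
/- Let A be a subtracted centrally image partition regular ω×ω matrix and let B be a Milliken–Taylor ω×ω matrix. Then the diagonal sum ( A 0 ; 0 B ) is image partition regular: whenever ℕ is partitioned into finitely many classes, there exist x, y ∈ ℕ^ω such that all entries of Ax and all entries of By lie in one and the same class. -/
/-- A left ideal of `(βℕ,+)`: a nonempty set `L` with `βℕ + L ⊆ L`. -/
def IsLeftIdealAdd (L : Set (Ultrafilter ℕ+)) : Prop :=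
  L.Nonempty ∧ ∀ p q, q ∈ L → uadd p q ∈ L

/-- A minimal left ideal of `(βℕ,+)`. -/
def IsMinimalLeftIdealAdd (L : Set (Ultrafilter ℕ+)) : Prop :=
  IsLeftIdealAdd L ∧ ∀ L', IsLeftIdealAdd L' → L' ⊆ L → L' = L

/-- `K(βℕ,+)`, the union of all minimal left ideals of `(βℕ,+)`. -/
def KAdd : Set (Ultrafilter ℕ+) :=
  {p | ∃ L, IsMinimalLeftIdealAdd L ∧ p ∈ L}

/-- `C ⊆ ℕ` is central in `(ℕ,+)`: `C` belongs to some idempotent of `K(βℕ,+)`. -/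
def IsCentralAdd (C : Set ℕ+) : Prop :=
  ∃ p : Ultrafilter ℕ+, uadd p p = p ∧ p ∈ KAdd ∧ C ∈ p

/-- An `ω×ω` matrix is centrally image partition regular if every additively central
set contains the entries of an image `Ax`, `x ∈ ℕ^ω`. -/
def CentrallyIPR (A : ℕ → ℕ → ℚ) : Prop :=
  ∀ C : Set ℕ+, IsCentralAdd C → ∃ x : ℕ → ℕ+, entriesIn (mulVecQ A x) C

/-- Definition 2.11: `A` is subtracted centrally image partition regular if
(1) no row of `A` is zero, (2) `A` is row-finite, and (3) for some `n ∈ ω`, `k ≥ 1`,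
the rows of the submatrix formed by columns `n, n+1, …, n+k-1` are precisely the
rows of a finite image partition regular matrix, while the remaining columns form a
centrally image partition regular matrix. -/
def SubtractedCentrallyIPR (A : ℕ → ℕ → ℚ) : Prop :=
  (∀ i, ∃ j, A i j ≠ 0) ∧
  (∀ i, {j | A i j ≠ 0}.Finite) ∧
  ∃ (n k : ℕ), 0 < k ∧
    (∃ (u : ℕ) (F : Fin u → Fin k → ℚ), IPR F ∧
      Set.range (fun i => fun t : Fin k => A i (n + (t : ℕ))) = Set.range F) ∧
    CentrallyIPR (fun i j => A i (if j < n then j else j + k))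

/-- `compress l` is `c(l)`: delete all zeros, then delete every entry equal to its
predecessor. -/
def compress (l : List ℕ) : List ℕ :=
  (l.filter (· ≠ 0)).destutter (· ≠ ·)

/-- The infinite row `r` (eventually zero) has compressed form `a`. -/
def rowCompressedTo (r : ℕ → ℕ) (a : List ℕ) : Prop :=
  ∃ N, (∀ j, N ≤ j → r j = 0) ∧ compress ((List.range N).map r) = a

/-- Definition 2.15: `M` is a Milliken–Taylor matrix if each row of `M` has finitely
many nonzero entries and, for some finite compressed sequence `a ≠ []`, the rows of
`M` are precisely all row vectors `r ∈ ω^ω` with `c(r) = a`. -/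
def MillikenTaylor (M : ℕ → ℕ → ℕ) : Prop :=
  (∀ i, {j | M i j ≠ 0}.Finite) ∧
  ∃ a : List ℕ, a ≠ [] ∧ compress a = a ∧
    (∀ i, rowCompressedTo (M i) a) ∧
    (∀ r : ℕ → ℕ, rowCompressedTo r a → ∃ i, M i = r)

open Filter

/-! ### Basic facts about ultrafilters -/

theorem uadd_ev (p q : Ultrafilter ℕ+) (P : ℕ+ → Prop) :
    (∀ᶠ z in (uadd p q : Filter ℕ+), P z) ↔
      ∀ᶠ x in (p : Filter ℕ+), ∀ᶠ y in (q : Filter ℕ+), P (x + y) := Iff.rfl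

theorem idem_ev {p : Ultrafilter ℕ+} (hp : uadd p p = p) (P : ℕ+ → Prop) :
    (∀ᶠ x in (p : Filter ℕ+), ∀ᶠ y in (p : Filter ℕ+), P (x + y)) ↔
      ∀ᶠ z in (p : Filter ℕ+), P z := by
  rw [← uadd_ev, hp]

theorem uf_ext {p q : Ultrafilter ℕ+}
    (h : ∀ P : ℕ+ → Prop, (∀ᶠ z in (p : Filter ℕ+), P z) → ∀ᶠ z in (q : Filter ℕ+), P z) :
    p = q := by
  apply Ultrafilter.coe_injective
  apply (Ultrafilter.unique p _).symm
  intro s hs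
  exact h (· ∈ s) hs

theorem uadd_assoc (p q r : Ultrafilter ℕ+) : uadd (uadd p q) r = uadd p (uadd q r) := by
  apply uf_ext
  intro P h
  simp only [uadd_ev] at h ⊢
  simpa only [add_assoc] using h

theorem leftIdeal_range (q : Ultrafilter ℕ+) : IsLeftIdealAdd (Set.range fun p => uadd p q) := by
  refine ⟨⟨_, ⟨q, rfl⟩⟩, ?_⟩
  rintro p _ ⟨r, rfl⟩
  exact ⟨uadd p r, uadd_assoc p r q⟩

theorem continuous_uadd (q : Ultrafilter ℕ+) : Continuous fun p => uadd p q :=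
  Ultrafilter.continuous_add_left q

theorem exists_minimal_idem : ∃ p : Ultrafilter ℕ+, uadd p p = p ∧ p ∈ KAdd := by
  -- minimal closed left ideal
  let S : Set (Set (Ultrafilter ℕ+)) := {L | IsClosed L ∧ IsLeftIdealAdd L}
  have hz : ∃ L, Minimal (· ∈ S) L := by
    obtain ⟨L, -, hL⟩ := zorn_superset_nonempty S (by
      intro c hcS hc hne
      refine ⟨⋂₀ c, ⟨isClosed_sInter fun L hL => (hcS hL).1, ?_, ?_⟩,
        fun s hs => Set.sInter_subset_of_mem hs⟩
      · have := hne.to_subtype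
        apply IsCompact.nonempty_sInter_of_directed_nonempty_isCompact_isClosed
        · intro a ha b hb
          rcases hc.total ha hb with h | h
          · exact ⟨a, ha, subset_rfl, h⟩
          · exact ⟨b, hb, h, subset_rfl⟩
        · exact fun L hL => (hcS hL).2.1
        · exact fun L hL => (hcS hL).1.isCompact
        · exact fun L hL => (hcS hL).1
      · intro p q hq L hL
        exact (hcS hL).2.2 p q (hq L hL)) Set.univ
      ⟨isClosed_univ, ⟨⟨pure 1, trivial⟩, fun _ _ _ => trivial⟩⟩
    exact ⟨L, hL⟩
  obtain ⟨L, hL⟩ := hz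
  have hmin : IsMinimalLeftIdealAdd L := by
    refine ⟨hL.1.2, fun L' hL' hsub => hsub.antisymm ?_⟩
    obtain ⟨q, hq⟩ := hL'.1
    have h1 : (Set.range fun p => uadd p q) ⊆ L' := by
      rintro _ ⟨p, rfl⟩
      exact hL'.2 p q hq
    have h2 : (Set.range fun p => uadd p q) ∈ S :=
      ⟨(isCompact_range (continuous_uadd q)).isClosed, leftIdeal_range q⟩
    exact (hL.2 h2 (h1.trans hsub)).trans h1
  let : AddSemigroup (Ultrafilter ℕ+) := Ultrafilter.addSemigroup
  obtain ⟨p, hp, hpp⟩ := exists_idempotent_in_compact_add_subsemigroup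
    (M := Ultrafilter ℕ+) continuous_uadd L hL.1.2.1 hL.1.1.isCompact
    (fun x _ y hy => hL.1.2.2 x y hy)
  exact ⟨p, hpp, L, hmin, hp⟩

theorem synd {p : Ultrafilter ℕ+} (hp : p ∈ KAdd) {C : Set ℕ+} (hC : C ∈ p) :
    ∃ H : Finset ℕ+, ∀ x : ℕ+, ∃ h ∈ H, ∀ᶠ y in (p : Filter ℕ+), h + x + y ∈ C := by
  obtain ⟨L, ⟨hL, hmin⟩, hpL⟩ := hp
  let B : ℕ+ → Set ℕ+ := fun h => {x | ∀ᶠ y in (p : Filter ℕ+), h + x + y ∈ C}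
  have key : ∀ q : Ultrafilter ℕ+, ∃ h, B h ∈ q := by
    intro q
    have h1 : (Set.range fun r => uadd r (uadd q p)) = L := by
      apply hmin _ (leftIdeal_range _)
      rintro _ ⟨r, rfl⟩
      exact hL.2 _ _ (hL.2 _ _ hpL)
    have h2 : p ∈ (Set.range fun r => uadd r (uadd q p)) := h1 ▸ hpL
    obtain ⟨r, hr⟩ := h2
    have h3 : ∀ᶠ z in (uadd r (uadd q p) : Filter ℕ+), z ∈ C := by
      simp only at hr; rw [hr]; exact hC
    rw [uadd_ev] at h3
    obtain ⟨h, hh⟩ := h3.exists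
    rw [uadd_ev] at hh
    refine ⟨h, ?_⟩
    filter_upwards [hh] with x hx
    filter_upwards [hx] with y hy
    rw [add_assoc]; exact hy
  by_contra hcon
  push Not at hcon
  let f : Filter ℕ+ := ⨅ h, 𝓟 (B h)ᶜ
  have hne : f.NeBot := by
    rw [Filter.neBot_iff]
    intro hbot
    have : (∅ : Set ℕ+) ∈ f := by rw [hbot]; trivial
    rw [Filter.mem_iInf_finite] at this
    obtain ⟨t, ht⟩ := this
    rw [Filter.iInf_principal_finset, Filter.mem_principal] at ht
    obtain ⟨x, hx⟩ := hcon t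
    exact ht (Set.mem_iInter₂.2 fun h hh => by
      intro hxB
      obtain ⟨y, h1, h2⟩ := (Filter.Eventually.and hxB (hx h hh)).exists
      exact h2 h1)
  obtain ⟨h, hh⟩ := key (Ultrafilter.of f)
  have h2 : (B h)ᶜ ∈ Ultrafilter.of f :=
    Ultrafilter.of_le f (Filter.mem_iInf_of_mem h (Filter.mem_principal_self _))
  exact (Ultrafilter.compl_mem_iff_notMem.1 h2) hh

theorem idem_dvd {p : Ultrafilter ℕ+} (hp : uadd p p = p) (k : ℕ) (hk : 0 < k) :
    ∀ᶠ z : ℕ+ in (p : Filter ℕ+), k ∣ (z : ℕ) := by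
  have : NeZero k := ⟨hk.ne'⟩
  have h1 : ∃ c : ZMod k, ∀ᶠ z : ℕ+ in (p : Filter ℕ+), ((z : ℕ) : ZMod k) = c := by
    have : ∀ᶠ z : ℕ+ in (p : Filter ℕ+), ∃ c : ZMod k, ((z : ℕ) : ZMod k) = c := by
      filter_upwards with z
      exact ⟨_, rfl⟩
    exact (Ultrafilter.eventually_exists_iff).1 this
  obtain ⟨c, hc⟩ := h1
  have h2 := (idem_ev hp _).2 hc
  obtain ⟨x, hx⟩ := (h2.and hc).exists
  obtain ⟨y, hy⟩ := (hx.1.and hc).exists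
  have h0 : c = 0 := by
    have := hy.1
    push_cast at this
    rw [hx.2, hy.2] at this
    simpa using this
  filter_upwards [hc] with z hz
  rw [h0] at hz
  exact (ZMod.natCast_eq_zero_iff _ _).1 hz

/-! ### Images of finite matrices in central sets -/

/-- Members of `p` contain partial images (rows in `R`) with entries of `x` divisible by `k`. -/
def Claim {u v : ℕ} (p : Ultrafilter ℕ+) (F : Fin u → Fin v → ℚ) (R : Finset (Fin u)) : Prop :=
  ∀ k : ℕ, 0 < k → ∀ C ∈ p, ∃ x : Fin v → ℕ, (∀ j, 0 < x j ∧ k ∣ x j) ∧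
    ∀ i ∈ R, ∃ n ∈ C, ∑ j, F i j * (x j : ℚ) = ((n : ℕ+) : ℕ)

theorem claim_seq {u v : ℕ} {p : Ultrafilter ℕ+} (hp : uadd p p = p) {F : Fin u → Fin v → ℚ}
    {R : Finset (Fin u)} (hR : Claim p F R) (k : ℕ) (hk : 0 < k) {ι : Type} [DecidableEq ι]
    (s : Finset ι) : ∀ C ∈ p, ∃ X : ι → Fin v → ℕ, (∀ t j, 0 < X t j ∧ k ∣ X t j) ∧
      ∀ α ⊆ s, α.Nonempty → ∀ i ∈ R, ∃ n ∈ C,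
        ∑ j, F i j * ((∑ t ∈ α, X t j : ℕ) : ℚ) = ((n : ℕ+) : ℕ) := by
  induction s using Finset.induction with
  | empty =>
    intro C hC
    refine ⟨fun _ _ => k, fun _ _ => ⟨hk, dvd_rfl⟩, fun α hα hne => ?_⟩
    rw [Finset.subset_empty.1 hα] at hne
    exact absurd hne Finset.not_nonempty_empty
  | insert t s hts ih =>
    intro C hC
    have h1 : {x | x ∈ C ∧ ∀ᶠ y in (p : Filter ℕ+), x + y ∈ C} ∈ p :=
      Filter.Eventually.and hC ((idem_ev hp (· ∈ C)).2 hC)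
    obtain ⟨x, hx, hxR⟩ := hR k hk _ h1
    choose! N hN hNx using hxR
    have h2 : {y | y ∈ C ∧ ∀ i ∈ R, N i + y ∈ C} ∈ p := by
      apply Filter.Eventually.and hC
      rw [Filter.eventually_all_finset]
      exact fun i hi => (hN i hi).2
    obtain ⟨X, hX, hXR⟩ := ih _ h2
    refine ⟨Function.update X t x, ?_, ?_⟩
    · intro t' j
      by_cases h : t' = t
      · subst h; simpa using hx j
      · simpa [Function.update_of_ne h] using hX t' j
    · intro α hα hne i hi
      have hcong : ∀ β ⊆ s, ∀ j, ∑ t' ∈ β, Function.update X t x t' j = ∑ t' ∈ β, X t' j := by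
        intro β hβ j
        apply Finset.sum_congr rfl
        intro t' ht'
        have : t' ≠ t := fun h => hts (h ▸ hβ ht')
        rw [Function.update_of_ne this]
      by_cases htα : t ∈ α
      · have hsub : α.erase t ⊆ s := by
          intro t' ht'
          rw [Finset.mem_erase] at ht'
          exact (Finset.mem_insert.1 (hα ht'.2)).resolve_left ht'.1
        have hsum : ∀ j, ∑ t' ∈ α, Function.update X t x t' j
            = x j + ∑ t' ∈ α.erase t, X t' j := by
          intro j
          rw [← Finset.add_sum_erase _ _ htα, hcong _ hsub]
          simp
        simp only [hsum]
        by_cases he : (α.erase t).Nonempty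
        · obtain ⟨n, ⟨hn1, hn2⟩, hn⟩ := hXR _ hsub he i hi
          refine ⟨N i + n, hn2 i hi, ?_⟩
          push_cast at hn ⊢
          rw [← hn, ← hNx i hi, ← Finset.sum_add_distrib]
          exact Finset.sum_congr rfl fun j _ => by ring
        · rw [Finset.not_nonempty_iff_eq_empty] at he
          rw [he]
          exact ⟨N i, (hN i hi).1, by simpa using hNx i hi⟩
      · have hsub : α ⊆ s := by
          intro t' ht'
          exact (Finset.mem_insert.1 (hα ht')).resolve_left fun h => htα (h ▸ ht')
        obtain ⟨n, hn, hn'⟩ := hXR α hsub hne i hi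
        exact ⟨n, hn.1, by simpa only [hcong α hsub] using hn'⟩

theorem exists_den {u v : ℕ} (F : Fin u → Fin v → ℚ) :
    ∃ d : ℕ, 0 < d ∧ ∀ i j, ∃ z : ℤ, F i j * d = z := by
  refine ⟨∏ i, ∏ j, (F i j).den, ?_, ?_⟩
  · exact Finset.prod_pos fun i _ => Finset.prod_pos fun j _ => (F i j).den_pos
  · intro i j
    have h : (F i j).den ∣ ∏ i, ∏ j, (F i j).den :=
      (Finset.dvd_prod_of_mem (fun j => (F i j).den) (Finset.mem_univ j)).trans
        (Finset.dvd_prod_of_mem (fun i => ∏ j, (F i j).den) (Finset.mem_univ i))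
    obtain ⟨e, he⟩ := h
    refine ⟨(F i j).num * e, ?_⟩
    rw [he]
    push_cast
    rw [← mul_assoc, Rat.mul_den_eq_num]

/-- there is a nonnegative rational vector (written `W / d`) whose image is `1` on `R'` and `0`
on `R` -/
def GoodVec {u v : ℕ} (F : Fin u → Fin v → ℚ) (R' R : Finset (Fin u)) : Prop :=
  ∃ (d : ℕ) (W : Fin v → ℕ), 0 < d ∧ (∀ i ∈ R', ∑ j, F i j * (W j : ℚ) = d) ∧
    (∀ i ∈ R, ∑ j, F i j * (W j : ℚ) = 0)

theorem claim_step {u v : ℕ} {p : Ultrafilter ℕ+} (hp : uadd p p = p) (hK : p ∈ KAdd)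
    {F : Fin u → Fin v → ℚ} {R R' : Finset (Fin u)} (hR : Claim p F R) (hG : GoodVec F R' R) :
    Claim p F (R ∪ R') := by
  classical
  intro k hk C hC
  obtain ⟨d, W, hd, hW', hW⟩ := hG
  obtain ⟨d', hd', hden⟩ := exists_den F
  set m := k * d with hm
  have hmpos : 0 < m := Nat.mul_pos hk hd
  have hC0 : {n : ℕ+ | n ∈ C ∧ m ∣ (n : ℕ)} ∈ p :=
    Filter.Eventually.and hC (idem_dvd hp m hmpos)
  obtain ⟨H, hH⟩ := synd hK hC0
  obtain ⟨ι, _, hι⟩ := Combinatorics.Line.exists_mono_in_high_dimension (Option (Fin u)) H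
  obtain ⟨X, hX, hXR⟩ := claim_seq hp hR (m * d') (Nat.mul_pos hmpos hd')
    (Finset.univ : Finset ι) C hC
  -- integer values
  have hz : ∀ i t, ∃ z : ℤ, (∑ j, F i j * (X t j : ℚ) = z) ∧ (m : ℤ) ∣ z := by
    intro i t
    choose a ha using hden i
    choose b hb using fun j => (hX t j).2
    refine ⟨m * ∑ j, a j * b j, ?_, dvd_mul_right _ _⟩
    push_cast
    rw [Finset.mul_sum]
    refine Finset.sum_congr rfl fun j _ => ?_
    rw [hb j, ← ha j]
    push_cast
    ring
  choose z0 hz0 hz0m using hz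
  let z : Option (Fin u) → ι → ℤ := fun o t => o.elim 0 fun i => z0 i t
  have hzm : ∀ o t, (m : ℤ) ∣ z o t := by
    intro o t
    cases o with
    | none => exact dvd_zero _
    | some i => exact hz0m i t
  let a0 : ℕ := 1 + ∑ t, ∑ o, (z o t).natAbs
  have hpos : ∀ w : ι → Option (Fin u), 0 < (a0 : ℤ) + ∑ t, z (w t) t := by
    intro w
    have h1 : -∑ t, z (w t) t ≤ ∑ t, ∑ o, ((z o t).natAbs : ℤ) := by
      rw [← Finset.sum_neg_distrib]
      refine Finset.sum_le_sum fun t _ => ?_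
      have h2 : ((z (w t) t).natAbs : ℤ) ≤ ∑ o, ((z o t).natAbs : ℤ) :=
        Finset.single_le_sum (f := fun o => ((z o t).natAbs : ℤ))
          (fun _ _ => by positivity) (Finset.mem_univ _)
      omega
    have : (a0 : ℤ) = 1 + ∑ t, ∑ o, ((z o t).natAbs : ℤ) := by
      simp only [a0]; push_cast; rfl
    omega
  have hval : ∀ w : ι → Option (Fin u), ∃ n : ℕ+, ((n : ℕ) : ℤ) = (a0 : ℤ) + ∑ t, z (w t) t := by
    intro w
    refine ⟨⟨((a0 : ℤ) + ∑ t, z (w t) t).toNat, by have := hpos w; omega⟩, ?_⟩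
    have := hpos w
    simp only [PNat.mk_coe]
    omega
  choose val hvaleq using hval
  choose col hcolH hcol using fun w => hH (val w)
  obtain ⟨l, c, hl⟩ := hι fun w => (⟨col w, hcolH w⟩ : H)
  have hl' : ∀ o, ∀ᶠ y in (p : Filter ℕ+),
      (c : ℕ+) + val (l o) + y ∈ {n : ℕ+ | n ∈ C ∧ m ∣ (n : ℕ)} := by
    intro o
    have h1 := hcol (l o)
    have h2 : col (l o) = c := congrArg Subtype.val (hl o)
    rw [h2] at h1
    exact h1
  obtain ⟨y, hy⟩ := (Filter.eventually_all.2 hl').exists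
  let α : Finset ι := Finset.univ.filter fun t => l.idxFun t = none
  have hαne : α.Nonempty := by
    obtain ⟨t, ht⟩ := l.proper
    exact ⟨t, by simp [α, ht]⟩
  have hsplit : ∀ o, ∑ t, z (l o t) t
      = ∑ t ∈ α, z o t + ∑ t ∈ Finset.univ.filter (fun t => ¬ l.idxFun t = none),
          z (l none t) t := by
    intro o
    rw [← Finset.sum_filter_add_sum_filter_not _ (fun t => l.idxFun t = none)]
    congr 1
    · refine Finset.sum_congr rfl fun t ht => ?_
      rw [l.apply_none _ _ (Finset.mem_filter.1 ht).2]
    · refine Finset.sum_congr rfl fun t ht => ?_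
      have h := (Finset.mem_filter.1 ht).2
      obtain ⟨b, hb⟩ := Option.ne_none_iff_exists'.1 h
      simp [hb]
  set θ : ℕ+ := c + val (l none) + y with hθ
  obtain ⟨θ', hθ'⟩ := (hy none).2
  have hrow : ∀ i, (((c + val (l (some i)) + y : ℕ+) : ℕ) : ℤ)
      = (θ : ℕ) + ∑ t ∈ α, z0 i t := by
    intro i
    have h1 := hvaleq (l none)
    have h2 := hvaleq (l (some i))
    rw [hsplit] at h1 h2
    have h3 : ∑ t ∈ α, z none t = 0 := Finset.sum_eq_zero fun t _ => rfl
    have h4 : ∑ t ∈ α, z (some i) t = ∑ t ∈ α, z0 i t := rfl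
    rw [hθ]
    push_cast
    rw [h1, h2, h3, h4]
    ring
  refine ⟨fun j => ∑ t ∈ α, X t j + θ' * k * W j, ?_, ?_⟩
  · intro j
    constructor
    · exact Nat.add_pos_left (Finset.sum_pos (fun t _ => (hX t j).1) hαne) _
    · refine dvd_add (Finset.dvd_sum fun t _ => ?_) ?_
      · exact ((Dvd.intro _ rfl : k ∣ k * d).trans (Dvd.intro _ rfl)).trans (hX t j).2
      · exact Dvd.intro_left (θ' * W j) (by ring)
  · intro i hi
    have hexp : ∑ j, F i j * ((∑ t ∈ α, X t j + θ' * k * W j : ℕ) : ℚ)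
        = ∑ j, F i j * ((∑ t ∈ α, X t j : ℕ) : ℚ) + θ' * k * ∑ j, F i j * (W j : ℚ) := by
      rw [Finset.mul_sum, ← Finset.sum_add_distrib]
      refine Finset.sum_congr rfl fun j _ => ?_
      push_cast
      ring
    by_cases hiR : i ∈ R
    · obtain ⟨n, hn, hn'⟩ := hXR α (Finset.subset_univ _) hαne i hiR
      refine ⟨n, hn, ?_⟩
      rw [hexp, hW i hiR, hn']
      ring
    · have hiR' : i ∈ R' := (Finset.mem_union.1 hi).resolve_left hiR
      refine ⟨_, (hy (some i)).1, ?_⟩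
      rw [hexp, hW' i hiR']
      have h5 : ∑ j, F i j * ((∑ t ∈ α, X t j : ℕ) : ℚ) = ((∑ t ∈ α, z0 i t : ℤ) : ℚ) := by
        push_cast
        simp only [Finset.mul_sum]
        rw [Finset.sum_comm]
        exact Finset.sum_congr rfl fun t _ => hz0 i t
      have h6 : (((c + val (l (some i)) + y : ℕ+) : ℕ) : ℚ)
          = (θ : ℕ) + ((∑ t ∈ α, z0 i t : ℤ) : ℚ) := by
        exact_mod_cast hrow i
      rw [h5, h6, hθ']
      rw [hm]
      push_cast
      ring

/-! ### The Farkas lemma and the geometry of finite image partition regular matrices -/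

theorem farkas {E : Type} [AddCommGroup E] [Module ℚ E] (n : ℕ) :
    ∀ (a : Fin n → E →ₗ[ℚ] ℚ) (b : E →ₗ[ℚ] ℚ), (∀ x, (∀ i, 0 ≤ a i x) → 0 ≤ b x) →
      ∃ c : Fin n → ℚ, (∀ i, 0 ≤ c i) ∧ ∀ x, b x = ∑ i, c i * a i x := by
  induction n with
  | zero =>
    intro a b h
    refine ⟨fun _ => 0, fun _ => le_rfl, fun x => ?_⟩
    have h1 := h x (fun i => i.elim0)
    have h2 := h (-x) (fun i => i.elim0)
    rw [map_neg] at h2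
    simp only [Finset.univ_eq_empty, Finset.sum_empty]
    linarith
  | succ n ih =>
    intro a b h
    by_cases hc : ∀ x, (∀ i : Fin n, 0 ≤ a i.castSucc x) → 0 ≤ b x
    · obtain ⟨c, hc0, hcx⟩ := ih (fun i => a i.castSucc) b hc
      refine ⟨Fin.snoc c 0, ?_, ?_⟩
      · intro i
        refine Fin.lastCases ?_ (fun i => ?_) i
        · simp
        · simpa using hc0 i
      · intro x
        rw [Fin.sum_univ_castSucc]
        simpa using hcx x
    · push Not at hc
      obtain ⟨x1, hx1, hb1⟩ := hc
      have hlast : a (Fin.last n) x1 < 0 := by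
        by_contra hcon
        push Not at hcon
        have := h x1 (fun i => Fin.lastCases hcon hx1 i)
        linarith
      obtain ⟨x0, hx0, hb0, hl0⟩ : ∃ x0, (∀ i : Fin n, 0 ≤ a i.castSucc x0) ∧ b x0 < 0 ∧
          a (Fin.last n) x0 = -1 := by
        have hs : 0 < (-(a (Fin.last n) x1))⁻¹ := by
          apply inv_pos.2; linarith
        refine ⟨(-(a (Fin.last n) x1))⁻¹ • x1, fun i => ?_, ?_, ?_⟩
        · rw [map_smul, smul_eq_mul]
          exact mul_nonneg hs.le (hx1 i)
        · rw [map_smul, smul_eq_mul]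
          exact mul_neg_of_pos_of_neg hs hb1
        · rw [map_smul, smul_eq_mul]
          have := hlast.ne
          field_simp
      let P : E →ₗ[ℚ] E := LinearMap.id + (a (Fin.last n)).smulRight x0
      have hP : ∀ x, P x = x + a (Fin.last n) x • x0 := fun x => rfl
      obtain ⟨c, hc0, hcx⟩ := ih (fun i => (a i.castSucc).comp P) (b.comp P) (by
        intro x hx
        apply h (P x)
        intro i
        refine Fin.lastCases ?_ (fun i => hx i) i
        rw [hP, map_add, map_smul, hl0, smul_eq_mul]
        linarith)
      refine ⟨Fin.snoc c (∑ i, c i * a i.castSucc x0 - b x0), ?_, ?_⟩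
      · intro i
        refine Fin.lastCases ?_ (fun i => ?_) i
        · simp only [Fin.snoc_last]
          have : 0 ≤ ∑ i, c i * a i.castSucc x0 :=
            Finset.sum_nonneg fun i _ => mul_nonneg (hc0 i) (hx0 i)
          linarith
        · simpa using hc0 i
      · intro x
        rw [Fin.sum_univ_castSucc]
        have h1 := hcx x
        simp only [LinearMap.comp_apply, hP, map_add, map_smul, smul_eq_mul, mul_add,
          Finset.sum_add_distrib] at h1
        simp only [Fin.snoc_castSucc, Fin.snoc_last]
        have h2 : ∑ i, c i * (a (Fin.last n) x * a i.castSucc x0)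
            = (∑ i, c i * a i.castSucc x0) * a (Fin.last n) x := by
          rw [Finset.sum_mul]
          exact Finset.sum_congr rfl fun i _ => by ring
        rw [h2] at h1
        linarith

theorem goodVec_or_cert {u v : ℕ} (F : Fin u → Fin v → ℚ) (R' R : Finset (Fin u))
    (hdis : Disjoint R' R) (hn : ¬ GoodVec F R' R) :
    ∃ l : Fin u → ℚ, (∀ j, 0 ≤ ∑ i ∈ R' ∪ R, l i * F i j) ∧ ∑ i ∈ R', l i < 0 := by
  classical
  by_contra hcon
  push Not at hcon
  apply hn
  let a : Fin v → (Fin u → ℚ) →ₗ[ℚ] ℚ := fun j =>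
    ∑ i ∈ R' ∪ R, (F i j) • LinearMap.proj i
  let b : (Fin u → ℚ) →ₗ[ℚ] ℚ := ∑ i ∈ R', LinearMap.proj i
  have ha : ∀ j l, a j l = ∑ i ∈ R' ∪ R, l i * F i j := by
    intro j l
    simp only [a, LinearMap.sum_apply, LinearMap.smul_apply, LinearMap.proj_apply, smul_eq_mul]
    exact Finset.sum_congr rfl fun i _ => mul_comm _ _
  have hb : ∀ l, b l = ∑ i ∈ R', l i := by
    intro l
    simp only [b, LinearMap.sum_apply, LinearMap.proj_apply]
  obtain ⟨c, hc0, hc⟩ := farkas v a b (by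
    intro l hl
    rw [hb]
    exact hcon l fun j => by rw [← ha]; exact hl j)
  -- clear denominators
  let d : ℕ := ∏ j, (c j).den
  have hd : 0 < d := Finset.prod_pos fun j _ => (c j).den_pos
  have hW : ∀ j, ∃ W : ℕ, (W : ℚ) = d * c j := by
    intro j
    obtain ⟨e, he⟩ : (c j).den ∣ d :=
      Finset.dvd_prod_of_mem (fun j => (c j).den) (Finset.mem_univ j)
    refine ⟨(c j).num.toNat * e, ?_⟩
    have h1 : (((c j).num.toNat : ℤ) : ℚ) = (c j).num := by
      rw [Int.toNat_of_nonneg (Rat.num_nonneg.2 (hc0 j))]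
    have h2 := Rat.mul_den_eq_num (c j)
    rw [he]
    push_cast at h1 ⊢
    rw [h1, ← h2]
    ring
  choose W hW using hW
  have hrow : ∀ i ∈ R' ∪ R, ∑ j, F i j * (W j : ℚ) = d * b (Pi.single i 1) := by
    intro i hi
    rw [hc, Finset.mul_sum]
    refine Finset.sum_congr rfl fun j _ => ?_
    rw [ha, hW]
    have : ∑ i' ∈ R' ∪ R, (Pi.single i (1 : ℚ) : Fin u → ℚ) i' * F i' j = F i j := by
      rw [Finset.sum_eq_single i]
      · simp
      · intro i' _ hne
        simp [Pi.single_eq_of_ne hne]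
      · exact fun h => absurd hi h
    rw [this]
    ring
  refine ⟨d, W, hd, fun i hi => ?_, fun i hi => ?_⟩
  · rw [hrow i (Finset.mem_union_left _ hi), hb, Finset.sum_eq_single i]
    · simp
    · intro i' _ hne
      simp [Pi.single_eq_of_ne hne]
    · exact fun h => absurd hi h
  · rw [hrow i (Finset.mem_union_right _ hi), hb, Finset.sum_eq_zero, mul_zero]
    intro i' hi'
    have : i' ≠ i := fun h => Finset.disjoint_left.1 hdis hi' (h ▸ hi)
    simp [Pi.single_eq_of_ne this]

theorem goodVec_eventually {u v : ℕ} (F : Fin u → Fin v → ℚ) (R' R : Finset (Fin u))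
    (hdis : Disjoint R' R) :
    ∃ ε0 : ℝ, 0 < ε0 ∧ ∀ ε : ℝ, 0 < ε → ε ≤ ε0 →
      ∀ (x : Fin v → ℕ) (y : Fin u → ℝ) (y0 : ℝ), 0 < y0 →
        (∀ i, ∑ j, (F i j : ℝ) * (x j : ℝ) = y i) →
        (∀ i ∈ R', |y i - y0| ≤ ε * y0) → (∀ i ∈ R, |y i| ≤ ε * y0) → GoodVec F R' R := by
  by_cases hG : GoodVec F R' R
  · exact ⟨1, one_pos, fun _ _ _ _ _ _ _ _ _ _ => hG⟩
  obtain ⟨l, hl, hneg⟩ := goodVec_or_cert F R' R hdis hG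
  set S : ℝ := ∑ i ∈ R' ∪ R, |(l i : ℝ)| with hS
  set t : ℝ := -∑ i ∈ R', (l i : ℝ) with ht
  have htpos : 0 < t := by
    have : ((∑ i ∈ R', l i : ℚ) : ℝ) < 0 := by exact_mod_cast hneg
    push_cast at this
    linarith
  have hS0 : 0 ≤ S := Finset.sum_nonneg fun _ _ => abs_nonneg _
  refine ⟨t / (2 * (S + 1)), by positivity, ?_⟩
  intro ε hε hε0 x y y0 hy0 hxy hR' hR
  exfalso
  have h1 : 0 ≤ ∑ i ∈ R' ∪ R, (l i : ℝ) * y i := by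
    have : ∑ i ∈ R' ∪ R, (l i : ℝ) * y i
        = ∑ j, (∑ i ∈ R' ∪ R, (l i : ℝ) * F i j) * x j := by
      simp only [← hxy, Finset.mul_sum, Finset.sum_mul]
      rw [Finset.sum_comm]
      exact Finset.sum_congr rfl fun j _ => Finset.sum_congr rfl fun i _ => by ring
    rw [this]
    refine Finset.sum_nonneg fun j _ => mul_nonneg ?_ (Nat.cast_nonneg _)
    have := hl j
    have h' : (0 : ℝ) ≤ ((∑ i ∈ R' ∪ R, l i * F i j : ℚ) : ℝ) := by exact_mod_cast this
    push_cast at h'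
    exact h'
  have h2 : ∑ i ∈ R' ∪ R, (l i : ℝ) * y i
      = -t * y0 + (∑ i ∈ R', (l i : ℝ) * (y i - y0) + ∑ i ∈ R, (l i : ℝ) * y i) := by
    rw [Finset.sum_union hdis, ht]
    have : ∑ i ∈ R', (l i : ℝ) * (y i - y0) = ∑ i ∈ R', (l i : ℝ) * y i
        - (∑ i ∈ R', (l i : ℝ)) * y0 := by
      rw [Finset.sum_mul, ← Finset.sum_sub_distrib]
      exact Finset.sum_congr rfl fun i _ => by ring
    rw [this]
    ring
  have h3 : ∑ i ∈ R', (l i : ℝ) * (y i - y0) ≤ ∑ i ∈ R', |(l i : ℝ)| * (ε * y0) :=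
    Finset.sum_le_sum fun i hi => by
      calc (l i : ℝ) * (y i - y0) ≤ |(l i : ℝ) * (y i - y0)| := le_abs_self _
        _ = |(l i : ℝ)| * |y i - y0| := abs_mul _ _
        _ ≤ _ := mul_le_mul_of_nonneg_left (hR' i hi) (abs_nonneg _)
  have h4 : ∑ i ∈ R, (l i : ℝ) * y i ≤ ∑ i ∈ R, |(l i : ℝ)| * (ε * y0) :=
    Finset.sum_le_sum fun i hi => by
      calc (l i : ℝ) * y i ≤ |(l i : ℝ) * y i| := le_abs_self _
        _ = |(l i : ℝ)| * |y i| := abs_mul _ _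
        _ ≤ _ := mul_le_mul_of_nonneg_left (hR i hi) (abs_nonneg _)
  have h5 : ∑ i ∈ R', |(l i : ℝ)| * (ε * y0) + ∑ i ∈ R, |(l i : ℝ)| * (ε * y0)
      = S * ε * y0 := by
    rw [hS, Finset.sum_union hdis, ← Finset.sum_mul, ← Finset.sum_mul]
    ring
  have h6 : S * ε < t := by
    have : ε * (2 * (S + 1)) ≤ t := by
      rwa [le_div_iff₀ (by positivity)] at hε0
    nlinarith
  have h7 : 0 < (t - S * ε) * y0 := mul_pos (by linarith) hy0
  nlinarith

/-- clustering from a logarithmic coloring -/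
theorem cluster {u v : ℕ} {F : Fin u → Fin v → ℚ} (hF : IPR F) (ε : ℝ) (hε : 0 < ε) :
    ∃ (x : Fin v → ℕ+) (y : Fin u → ℕ+), (∀ i, ∑ j, F i j * ((x j : ℕ) : ℚ) = ((y i : ℕ) : ℚ)) ∧
      ∀ i j, (y i : ℕ) ≤ (y j : ℕ) →
        ((y j : ℕ) : ℝ) ≤ (1 + ε) * (y i : ℕ) ∨ ((y i : ℕ) : ℝ) ≤ ε * (y j : ℕ) := by
  set δ := Real.log (1 + ε) with hδ
  have hδpos : 0 < δ := Real.log_pos (by linarith)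
  obtain ⟨M, hM⟩ := exists_nat_gt (-(Real.log ε) / δ)
  let g : ℕ+ → ℕ := fun n => ⌊Real.log (n : ℕ) / δ⌋₊
  obtain ⟨k, x, hx⟩ := hF (M + 1) fun n => ⟨g n % (M + 1), Nat.mod_lt _ (Nat.succ_pos _)⟩
  choose y hy hxy using hx
  refine ⟨x, y, fun i => ?_, ?_⟩
  · rw [← hxy i, mulVecQ, finsum_eq_sum_of_fintype]
  · intro i j hij
    have hyi : (0 : ℝ) < (y i : ℕ) := by exact_mod_cast (y i).pos
    have hyj : (0 : ℝ) < (y j : ℕ) := by exact_mod_cast (y j).pos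
    have hlog : Real.log (y i : ℕ) ≤ Real.log (y j : ℕ) :=
      Real.log_le_log hyi (by exact_mod_cast hij)
    have hli0 : 0 ≤ Real.log (y i : ℕ) / δ :=
      div_nonneg (Real.log_natCast_nonneg _) hδpos.le
    have hlj0 : 0 ≤ Real.log (y j : ℕ) / δ :=
      div_nonneg (Real.log_natCast_nonneg _) hδpos.le
    have hgle : g (y i) ≤ g (y j) := Nat.floor_le_floor (by gcongr)
    have hmod : g (y i) % (M + 1) = g (y j) % (M + 1) := by
      have h1 : (⟨g (y i) % (M + 1), Nat.mod_lt _ (Nat.succ_pos _)⟩ : Fin (M + 1)) = k := hy i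
      have h2 : (⟨g (y j) % (M + 1), Nat.mod_lt _ (Nat.succ_pos _)⟩ : Fin (M + 1)) = k := hy j
      exact congrArg Fin.val (h1.trans h2.symm)
    have hi1 : (g (y i) : ℝ) ≤ Real.log (y i : ℕ) / δ := Nat.floor_le hli0
    have hi2 : Real.log (y i : ℕ) / δ < g (y i) + 1 := Nat.lt_floor_add_one _
    have hj1 : (g (y j) : ℝ) ≤ Real.log (y j : ℕ) / δ := Nat.floor_le hlj0
    have hj2 : Real.log (y j : ℕ) / δ < g (y j) + 1 := Nat.lt_floor_add_one _
    rw [div_lt_iff₀ hδpos] at hi2 hj2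
    rw [le_div_iff₀ hδpos] at hi1 hj1
    rcases hgle.eq_or_lt with heq | hlt
    · left
      rw [← Real.log_le_log_iff hyj (by positivity), Real.log_mul (by positivity) hyi.ne', ← hδ]
      rw [heq] at hi1
      nlinarith
    · right
      have hge : g (y i) + (M + 1) ≤ g (y j) := by
        have h3 := (Nat.modEq_iff_dvd' hgle).1 hmod
        have := Nat.le_of_dvd (by omega) h3
        omega
      have hge' : (g (y i) : ℝ) + (M + 1) ≤ g (y j) := by exact_mod_cast hge
      rw [div_lt_iff₀ hδpos] at hM
      rw [← Real.log_le_log_iff hyi (by positivity), Real.log_mul hε.ne' hyj.ne']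
      nlinarith

theorem claim_univ {u v : ℕ} {F : Fin u → Fin v → ℚ} (hF : IPR F) {p : Ultrafilter ℕ+}
    (hp : uadd p p = p) (hK : p ∈ KAdd) : Claim p F Finset.univ := by
  classical
  -- choose ε
  have hev : ∃ ε0 : ℝ, 0 < ε0 ∧ ∀ R' R : Finset (Fin u), Disjoint R' R →
      ∀ ε : ℝ, 0 < ε → ε ≤ ε0 →
      ∀ (x : Fin v → ℕ) (y : Fin u → ℝ) (y0 : ℝ), 0 < y0 →
        (∀ i, ∑ j, (F i j : ℝ) * (x j : ℝ) = y i) →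
        (∀ i ∈ R', |y i - y0| ≤ ε * y0) → (∀ i ∈ R, |y i| ≤ ε * y0) → GoodVec F R' R := by
    choose! e he0 he using goodVec_eventually F
    let e' : Finset (Fin u) × Finset (Fin u) → ℝ := fun q =>
      if Disjoint q.1 q.2 then e q.1 q.2 else 1
    have hpos : ∀ q, 0 < e' q := by
      intro q
      by_cases h : Disjoint q.1 q.2
      · simp only [e', if_pos h]; exact he0 _ _ h
      · simp only [e', if_neg h]; exact one_pos
    obtain ⟨q0, hq0⟩ := Finite.exists_min e'
    refine ⟨e' q0, hpos q0, fun R' R hdis ε hε hle => he R' R hdis ε hε (hle.trans ?_)⟩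
    have := hq0 (R', R)
    simpa only [e', if_pos hdis] using this
  obtain ⟨ε0, hε0, hgood⟩ := hev
  set ε := min ε0 (1 / 4) with hεdef
  have hε : 0 < ε := lt_min hε0 (by norm_num)
  have hε4 : ε ≤ 1 / 4 := min_le_right _ _
  obtain ⟨x, y, hxy, hcl⟩ := cluster hF ε hε
  let Y : Fin u → ℝ := fun i => ((y i : ℕ) : ℝ)
  have hYpos : ∀ i, 0 < Y i := fun i => by
    have := (y i).pos
    simp only [Y]; exact_mod_cast this
  have hclY : ∀ i j, Y i ≤ Y j → Y j ≤ (1 + ε) * Y i ∨ Y i ≤ ε * Y j := by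
    intro i j h
    have h' : ((y i : ℕ) : ℝ) ≤ ((y j : ℕ) : ℝ) := h
    exact hcl i j (by exact_mod_cast h')
  have hxY : ∀ i, ∑ j, (F i j : ℝ) * (((x j : ℕ)) : ℝ) = Y i := by
    intro i
    have := congrArg (fun q : ℚ => (q : ℝ)) (hxy i)
    simp only [Y]
    push_cast at this
    exact this
  -- induction: enlarge closed sets of rows
  have main : ∀ n : ℕ, ∃ R : Finset (Fin u), (n ≤ R.card ∨ R = Finset.univ) ∧ Claim p F R ∧
      ∀ i ∈ R, ∀ j, Y j ≤ (1 + ε) * Y i → j ∈ R := by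
    intro n
    induction n with
    | zero =>
      refine ⟨∅, Or.inl (Nat.zero_le _), ?_, ?_⟩
      · intro k hk C hC
        exact ⟨fun _ => k, fun _ => ⟨hk, dvd_rfl⟩, fun i hi => absurd hi (Finset.notMem_empty i)⟩
      · exact fun i hi => absurd hi (Finset.notMem_empty i)
    | succ n ih =>
      obtain ⟨R, hcard, hcl, hclosed⟩ := ih
      by_cases hR : R = Finset.univ
      · exact ⟨R, Or.inr hR, hcl, hclosed⟩
      have hne : (Finset.univ \ R).Nonempty := by
        rw [Finset.sdiff_nonempty]
        intro h
        exact hR (Finset.univ_subset_iff.1 h)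
      obtain ⟨i0, hi0, hmin⟩ := Finset.exists_min_image (Finset.univ \ R) Y hne
      have hi0R : i0 ∉ R := (Finset.mem_sdiff.1 hi0).2
      let R' := (Finset.univ \ R).filter fun j => Y j ≤ (1 + ε) * Y i0
      have hi0R' : i0 ∈ R' := by
        simp only [R', Finset.mem_filter]
        exact ⟨hi0, by nlinarith [hYpos i0]⟩
      have hdis : Disjoint R' R := by
        rw [Finset.disjoint_left]
        intro j hj
        exact (Finset.mem_sdiff.1 (Finset.mem_filter.1 hj).1).2
      have hG : GoodVec F R' R := by
        apply hgood R' R hdis ε hε (min_le_left _ _) (fun j => (x j : ℕ)) Y (Y i0) (hYpos i0) hxY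
        · intro j hj
          have h1 := (Finset.mem_filter.1 hj).2
          have h2 := hmin j (Finset.mem_filter.1 hj).1
          rw [abs_of_nonneg (by linarith)]
          linarith
        · intro j hj
          rw [abs_of_pos (hYpos j)]
          have h1 : ¬ Y i0 ≤ (1 + ε) * Y j := fun h => hi0R (hclosed j hj i0 h)
          have h2 : Y j ≤ Y i0 := by
            push Not at h1
            nlinarith [hYpos j]
          exact (hclY j i0 h2).resolve_left h1
      refine ⟨R ∪ R', Or.inl ?_, claim_step hp hK hcl hG, ?_⟩
      · rw [Finset.card_union_of_disjoint hdis.symm]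
        have : 0 < R'.card := Finset.card_pos.2 ⟨i0, hi0R'⟩
        have := hcard.resolve_right hR
        omega
      · intro i hi j hj
        by_cases hjR : j ∈ R
        · exact Finset.mem_union_left _ hjR
        have hjc : j ∈ Finset.univ \ R := Finset.mem_sdiff.2 ⟨Finset.mem_univ _, hjR⟩
        rcases Finset.mem_union.1 hi with hiR | hiR'
        · exact absurd (hclosed i hiR j hj) hjR
        · apply Finset.mem_union_right
          refine Finset.mem_filter.2 ⟨hjc, ?_⟩
          have h1 := (Finset.mem_filter.1 hiR').2
          have h2 := hmin j hjc
          refine (hclY i0 j h2).resolve_right ?_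
          intro h3
          have h4 : Y j ≤ (1 + ε) * ((1 + ε) * Y i0) :=
            hj.trans (mul_le_mul_of_nonneg_left h1 (by linarith))
          have h5 := hYpos i0
          have h6 : Y j ≤ 2 * Y i0 := by
            refine h4.trans ?_
            have : (1 + ε) * (1 + ε) ≤ 2 := by nlinarith
            nlinarith
          have h7 := hYpos j
          nlinarith
  obtain ⟨R, hcard, hcl, -⟩ := main (u + 1)
  have hR : R = Finset.univ := by
    refine hcard.resolve_left fun h => ?_
    have := Finset.card_le_univ R
    rw [Fintype.card_fin] at this
    omega
  rwa [hR] at hcl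

/-! ### Iterated limits along an idempotent ultrafilter and Milliken–Taylor systems -/

/-- `ItLim p Q [a₁, …, aₘ] s` says that `Q` holds for `s + a₁ z₁ + ⋯ + aₘ zₘ`, for `p`-almost all
`z₁`, for `p`-almost all `z₂`, and so on. -/
def ItLim (p : Ultrafilter ℕ+) (Q : ℕ → Prop) : List ℕ → ℕ → Prop
  | [], s => Q s
  | a :: l, s => ∀ᶠ z : ℕ+ in (p : Filter ℕ+), ItLim p Q l (s + a * z)

theorem acc_append (p : Ultrafilter ℕ+) (Q : ℕ → Prop) (l l' : List ℕ) (s : ℕ) :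
    ItLim p Q (l ++ l') s ↔ ItLim p (fun t => ItLim p Q l' t) l s := by
  induction l generalizing s with
  | nil => rfl
  | cons a l ih => simp only [List.cons_append, ItLim, ih]

theorem acc_dup {p : Ultrafilter ℕ+} (hp : uadd p p = p) (Q : ℕ → Prop) (a : ℕ) (l : List ℕ)
    (s : ℕ) : ItLim p Q (a :: a :: l) s ↔ ItLim p Q (a :: l) s := by
  simp only [ItLim]
  rw [← idem_ev hp (fun z => ItLim p Q l (s + a * z))]
  simp only [PNat.add_coe, mul_add, add_assoc]

theorem acc_mono {p : Ultrafilter ℕ+} {Q Q' : ℕ → Prop} (h : ∀ s, Q s → Q' s) (l : List ℕ)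
    (s : ℕ) (hs : ItLim p Q l s) : ItLim p Q' l s := by
  induction l generalizing s with
  | nil => exact h s hs
  | cons a l ih => exact Filter.Eventually.mono hs fun z hz => ih _ hz

theorem acc_exists {p : Ultrafilter ℕ+} {r : ℕ} {Q : Fin r → ℕ → Prop} (l : List ℕ)
    (s : ℕ) (hs : ItLim p (fun t => ∃ i, Q i t) l s) : ∃ i, ItLim p (Q i) l s := by
  induction l generalizing s with
  | nil => exact hs
  | cons a l ih =>
    have : ∀ᶠ z : ℕ+ in (p : Filter ℕ+), ∃ i, ItLim p (Q i) l (s + a * z) :=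
      Filter.Eventually.mono hs fun z hz => ih _ hz
    exact Ultrafilter.eventually_exists_iff.1 this

theorem acc_pos (p : Ultrafilter ℕ+) (l : List ℕ) (h0 : ∀ a ∈ l, a ≠ 0) (s : ℕ)
    (hs : l = [] → 0 < s) : ItLim p (fun t => 0 < t) l s := by
  induction l generalizing s with
  | nil => exact hs rfl
  | cons a l ih =>
    apply Filter.Eventually.of_forall
    intro z
    apply ih (fun b hb => h0 b (List.mem_cons_of_mem _ hb))
    intro _
    have h1 : 0 < a := Nat.pos_of_ne_zero (h0 a List.mem_cons_self)
    have h2 := z.pos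
    positivity

/-- the good states of the automaton reading rows -/
def GoodState (p : Ultrafilter ℕ+) (Q : ℕ → Prop) (st : List ℕ × ℕ) : Prop :=
  ItLim p Q st.1 st.2 ∧ ItLim p Q st.1.tail st.2

theorem good_stay {p : Ultrafilter ℕ+} (hp : uadd p p = p) {Q : ℕ → Prop} {h : ℕ} {l : List ℕ}
    {s : ℕ} (hg : GoodState p Q (h :: l, s)) :
    ∀ᶠ z : ℕ+ in (p : Filter ℕ+), GoodState p Q (h :: l, s + h * z) := by
  have h1 : ItLim p Q (h :: h :: l) s := (acc_dup hp Q h l s).2 hg.1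
  exact Filter.Eventually.and h1 hg.1

theorem good_move {p : Ultrafilter ℕ+} (hp : uadd p p = p) {Q : ℕ → Prop} {h b : ℕ} {l : List ℕ}
    {s : ℕ} (hg : GoodState p Q (h :: b :: l, s)) :
    ∀ᶠ z : ℕ+ in (p : Filter ℕ+), GoodState p Q (b :: l, s + b * z) := by
  have h1 : ItLim p Q (b :: b :: l) s := (acc_dup hp Q b l s).2 hg.2
  exact Filter.Eventually.and h1 hg.2

theorem mt_step {p : Ultrafilter ℕ+} (hp : uadd p p = p) {Q : ℕ → Prop}
    (S : Finset (List ℕ × ℕ)) (hS : ∀ st ∈ S, GoodState p Q st) :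
    ∃ (y : ℕ+) (S' : Finset (List ℕ × ℕ)), (∀ st ∈ S', GoodState p Q st) ∧ S ⊆ S' ∧
      (∀ h l s, (h :: l, s) ∈ S → (h :: l, s + h * y) ∈ S') ∧
      (∀ h b l s, (h :: b :: l, s) ∈ S → (b :: l, s + b * y) ∈ S') := by
  classical
  have h1 : ∀ᶠ y : ℕ+ in (p : Filter ℕ+), ∀ st ∈ S,
      (∀ h l, st.1 = h :: l → GoodState p Q (h :: l, st.2 + h * y)) ∧
      (∀ h b l, st.1 = h :: b :: l → GoodState p Q (b :: l, st.2 + b * y)) := by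
    rw [Filter.eventually_all_finset]
    rintro ⟨L, s⟩ hst
    have hg := hS _ hst
    match L, hg with
    | [], _ => exact Filter.Eventually.of_forall fun y => by simp
    | [h], hg =>
      filter_upwards [good_stay hp hg] with y hy
      refine ⟨?_, ?_⟩
      · rintro h' l' heq
        cases heq
        exact hy
      · rintro h' b' l' heq
        cases heq
    | h :: b :: l, hg =>
      filter_upwards [good_stay hp hg, good_move hp hg] with y hy hy'
      refine ⟨?_, ?_⟩
      · rintro h' l' heq
        cases heq
        exact hy
      · rintro h' b' l' heq
        cases heq
        exact hy'
  obtain ⟨y, hy⟩ := h1.exists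
  let f : List ℕ × ℕ → List ℕ × ℕ := fun st => (st.1, st.2 + st.1.headD 0 * y)
  let g : List ℕ × ℕ → List ℕ × ℕ := fun st => (st.1.tail, st.2 + st.1.tail.headD 0 * y)
  refine ⟨y, (S ∪ S.image f ∪ S.image g).filter (GoodState p Q), ?_, ?_, ?_, ?_⟩
  · exact fun st hst => (Finset.mem_filter.1 hst).2
  · intro st hst
    exact Finset.mem_filter.2 ⟨by simp [hst], hS _ hst⟩
  · intro h l s hst
    refine Finset.mem_filter.2 ⟨?_, (hy _ hst).1 h l rfl⟩
    apply Finset.mem_union_left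
    apply Finset.mem_union_right
    exact Finset.mem_image.2 ⟨_, hst, rfl⟩
  · intro h b l s hst
    refine Finset.mem_filter.2 ⟨?_, (hy _ hst).2 h b l rfl⟩
    apply Finset.mem_union_right
    exact Finset.mem_image.2 ⟨_, hst, rfl⟩

theorem destutter_head (w : List ℕ) (b : ℕ) :
    ∃ l, List.destutter' (· ≠ ·) b w = b :: l := by
  induction w with
  | nil => exact ⟨[], rfl⟩
  | cons c w ih =>
    by_cases h : b = c
    · rw [List.destutter'_cons_neg _ (by simpa using h)]
      exact ih
    · rw [List.destutter'_cons_pos _ h]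
      exact ⟨_, rfl⟩

theorem mt_exists {p : Ultrafilter ℕ+} (hp : uadd p p = p) {Q : ℕ → Prop} {a : List ℕ}
    (ha : ItLim p Q a 0) :
    ∃ y : ℕ → ℕ+, ∀ r : ℕ → ℕ, rowCompressedTo r a → Q (∑ᶠ j, r j * (y j : ℕ)) := by
  classical
  choose Y T hT1 hT2 hT3 hT4 using fun S : {S : Finset (List ℕ × ℕ) // ∀ st ∈ S, GoodState p Q st}
    => mt_step hp S.1 S.2
  have h0 : ∀ st ∈ ({(0 :: a, 0)} : Finset (List ℕ × ℕ)), GoodState p Q st := by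
    intro st hst
    rw [Finset.mem_singleton] at hst
    subst hst
    refine ⟨?_, ha⟩
    apply Filter.Eventually.of_forall
    intro z
    simpa using ha
  let S : ℕ → {S : Finset (List ℕ × ℕ) // ∀ st ∈ S, GoodState p Q st} := fun n =>
    Nat.rec ⟨_, h0⟩ (fun _ S => ⟨T S, hT1 S⟩) n
  have hS : ∀ n, (S (n + 1)).1 = T (S n) := fun n => rfl
  let y : ℕ → ℕ+ := fun n => Y (S n)
  refine ⟨y, fun r hr => ?_⟩
  obtain ⟨N, hN, hcomp⟩ := hr
  have main : ∀ k n h l s, (h :: l, s) ∈ (S n).1 →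
      (((List.range' n k).map r).filter (· ≠ 0)).destutter' (· ≠ ·) h = h :: l →
      Q (s + ∑ j ∈ Finset.Ico n (n + k), r j * (y j : ℕ)) := by
    intro k
    induction k with
    | zero =>
      intro n h l s hst hd
      simp only [List.range'_zero, List.map_nil, List.filter_nil, List.destutter'_nil] at hd
      cases hd
      have := ((S n).2 _ hst).2
      simpa [ItLim] using this
    | succ k ih =>
      intro n h l s hst hd
      rw [List.range'_succ, List.map_cons] at hd
      have hsum : s + ∑ j ∈ Finset.Ico n (n + (k + 1)), r j * (y j : ℕ)
          = (s + r n * y n) + ∑ j ∈ Finset.Ico (n + 1) (n + 1 + k), r j * (y j : ℕ) := by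
        rw [Finset.sum_eq_sum_Ico_succ_bot (by omega), add_assoc,
          show n + (k + 1) = n + 1 + k by ring]
      rw [hsum]
      by_cases hz : r n = 0
      · apply ih (n + 1) h l
        · rw [hS, hz]
          simpa using hT2 (S n) hst
        · rw [List.filter_cons_of_neg (by simpa using hz)] at hd
          exact hd
      · rw [List.filter_cons_of_pos (by simpa using hz)] at hd
        by_cases hh : r n = h
        · apply ih (n + 1) h l
          · rw [hS, hh]
            exact hT3 (S n) h l s hst
          · rw [List.destutter'_cons_neg _ (by simpa using hh.symm)] at hd
            exact hd
        · rw [List.destutter'_cons_pos _ (by exact fun h' => hh h'.symm)] at hd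
          have hl : List.destutter' (· ≠ ·) (r n)
              (((List.range' (n + 1) k).map r).filter (· ≠ 0)) = l := (List.cons.inj hd).2
          obtain ⟨l', hl'⟩ : ∃ l', l = r n :: l' := by
            rw [← hl]
            exact destutter_head _ _
          rw [hl'] at hl hst
          apply ih (n + 1) (r n) l' _ _ hl
          rw [hS]
          exact hT4 (S n) h (r n) l' s hst
  have hfin := main N 0 0 a 0 (by simp [S]) (by
    rw [List.range_eq_range'] at hcomp
    rw [← hcomp]
    unfold compress
    generalize hw : ((List.range' 0 N).map r).filter (· ≠ 0) = w
    have hw0 : ∀ b ∈ w, b ≠ 0 := by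
      intro b hb
      rw [← hw] at hb
      simpa using (List.mem_filter.1 hb).2
    cases w with
    | nil => rfl
    | cons b w =>
      rw [List.destutter'_cons_pos _ (hw0 b List.mem_cons_self).symm]
      rfl)
  rw [finsum_eq_sum_of_support_subset (s := Finset.range N)]
  · rw [zero_add, zero_add, ← Finset.range_eq_Ico] at hfin
    exact hfin
  · intro j hj
    by_contra hjN
    simp only [Finset.coe_range, Set.mem_Iio, not_lt] at hjN
    exact hj (by simp [hN j hjN])

theorem acc_image {u v : ℕ} {F : Fin u → Fin v → ℚ} {p : Ultrafilter ℕ+}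
    (hF : ∀ P ∈ p, ∃ x : Fin v → ℕ, (∀ j, 0 < x j) ∧
      ∀ i, ∃ n ∈ P, ∑ j, F i j * (x j : ℚ) = ((n : ℕ+) : ℕ))
    (Q : ℕ → Prop) (l : List ℕ) (h0 : ∀ a ∈ l, a ≠ 0) :
    ∀ s : Fin u → ℕ, (∀ i, ItLim p Q l (s i)) →
      ∃ x : Fin v → ℕ, (l ≠ [] → ∀ j, 0 < x j) ∧
        ∀ i, ∃ b : ℕ, ∑ j, F i j * (x j : ℚ) = b ∧ Q (s i + b) := by
  induction l with
  | nil =>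
    intro s hs
    exact ⟨fun _ => 0, fun h => absurd rfl h, fun i => ⟨0, by simp, hs i⟩⟩
  | cons a l ih =>
    intro s hs
    have h1 : {z : ℕ+ | ∀ i, ItLim p Q l (s i + a * z)} ∈ p := Filter.eventually_all.2 hs
    obtain ⟨x, hx, hxi⟩ := hF _ h1
    choose n hn hnx using hxi
    obtain ⟨x', -, hx'⟩ := ih (fun b hb => h0 b (List.mem_cons_of_mem _ hb))
      (fun i => s i + a * n i) (fun i => hn i i)
    refine ⟨fun j => a * x j + x' j, fun _ j => ?_, fun i => ?_⟩
    · have h2 : 0 < a := Nat.pos_of_ne_zero (h0 a List.mem_cons_self)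
      have h3 := hx j
      positivity
    · obtain ⟨b, hb, hQ⟩ := hx' i
      refine ⟨a * n i + b, ?_, by rw [← add_assoc]; exact hQ⟩
      push_cast
      rw [← hb, ← hnx i, Finset.mul_sum, ← Finset.sum_add_distrib]
      exact Finset.sum_congr rfl fun j _ => by ring

theorem exists_divided {p' : Ultrafilter ℕ+} (hp' : uadd p' p' = p') (e : ℕ) (he : 0 < e) :
    ∃ p : Ultrafilter ℕ+, uadd p p = p ∧ ∃ f : ℕ+ → ℕ+,
      (∀ n : ℕ+, e ∣ (n : ℕ) → e * (f n : ℕ) = n) ∧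
      (∀ P : ℕ+ → Prop, (∀ᶠ z in (p : Filter ℕ+), P z) ↔ ∀ᶠ n in (p' : Filter ℕ+), P (f n)) := by
  let f : ℕ+ → ℕ+ := fun n => Nat.toPNat' ((n : ℕ) / e)
  have hf : ∀ n : ℕ+, e ∣ (n : ℕ) → e * (f n : ℕ) = n := by
    intro n hn
    have h1 : 0 < (n : ℕ) / e := Nat.div_pos (Nat.le_of_dvd n.pos hn) he
    simp only [f]
    rw [Nat.toPNat'_coe, if_pos h1, Nat.mul_div_cancel' hn]
  have hdv := idem_dvd hp' e he
  refine ⟨p'.map f, ?_, f, hf, fun P => Iff.rfl⟩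
  symm
  apply uf_ext
  intro P hP
  have hP' : ∀ᶠ n in (p' : Filter ℕ+), P (f n) := hP
  have h2 := (idem_ev hp' (fun n => P (f n))).2 hP'
  change ∀ᶠ n in (p' : Filter ℕ+), ∀ᶠ m in (p' : Filter ℕ+), P (f n + f m)
  filter_upwards [h2, hdv] with n hn hdn
  filter_upwards [hn, hdv] with m hm hdm
  have : f (n + m) = f n + f m := by
    apply PNat.coe_injective
    apply Nat.eq_of_mul_eq_mul_left he
    rw [hf _ (by rw [PNat.add_coe]; exact dvd_add hdn hdm), PNat.add_coe, PNat.add_coe, mul_add,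
      hf n hdn, hf m hdm]
  rwa [this] at hm

/-! ### Final assembly -/

theorem mulVec_split (A : ℕ → ℕ → ℚ) (n k : ℕ) (x1 : Fin k → ℕ) (x2 x : ℕ → ℕ+) (i : ℕ)
    (hfin : {j | A i j ≠ 0}.Finite)
    (h1 : ∀ j, j < n → x j = x2 j)
    (h2 : ∀ t : Fin k, (x (n + (t : ℕ)) : ℕ) = x1 t)
    (h3 : ∀ j, n ≤ j → x (j + k) = x2 j) :
    mulVecQ A x i = ∑ t : Fin k, A i (n + (t : ℕ)) * (x1 t : ℚ)
      + mulVecQ (fun i j => A i (if j < n then j else j + k)) x2 i := by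
  obtain ⟨M, hM⟩ := hfin.bddAbove
  have hz : ∀ j, M < j → A i j = 0 := by
    intro j hj
    by_contra hne
    exact absurd (hM hne) (by omega)
  unfold mulVecQ
  rw [finsum_eq_sum_of_support_subset (s := Finset.range (n + k + (M + 1))),
    finsum_eq_sum_of_support_subset (s := Finset.range (n + (M + 1)))]
  · rw [Finset.sum_range_add _ (n + k) (M + 1), Finset.sum_range_add _ n k,
      Finset.sum_range_add _ n (M + 1)]
    have e1 : ∑ j ∈ Finset.range n, A i j * ((x j : ℕ) : ℚ)
        = ∑ j ∈ Finset.range n, A i (if j < n then j else j + k) * ((x2 j : ℕ) : ℚ) := by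
      apply Finset.sum_congr rfl
      intro j hj
      have hj' := Finset.mem_range.1 hj
      rw [if_pos hj', h1 j hj']
    have e2 : ∑ j ∈ Finset.range k, A i (n + j) * ((x (n + j) : ℕ) : ℚ)
        = ∑ t : Fin k, A i (n + (t : ℕ)) * (x1 t : ℚ) := by
      rw [Finset.sum_range]
      exact Finset.sum_congr rfl fun t _ => by rw [h2 t]
    have e3 : ∑ j ∈ Finset.range (M + 1), A i (n + k + j) * ((x (n + k + j) : ℕ) : ℚ)
        = ∑ j ∈ Finset.range (M + 1),
          A i (if n + j < n then n + j else n + j + k) * ((x2 (n + j) : ℕ) : ℚ) := by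
      apply Finset.sum_congr rfl
      intro j _
      rw [if_neg (by omega), ← h3 (n + j) (by omega), show n + k + j = n + j + k by ring]
    rw [e1, e2, e3]
    ring
  · intro j hj
    by_contra hjN
    simp only [Finset.coe_range, Set.mem_Iio, not_lt] at hjN
    refine hj ?_
    simp only []
    rw [if_neg (by omega), hz _ (by omega), zero_mul]
  · intro j hj
    by_contra hjN
    simp only [Finset.coe_range, Set.mem_Iio, not_lt] at hjN
    refine hj ?_
    simp only []
    rw [hz _ (by omega), zero_mul]

theorem compressed_ne_zero {a : List ℕ} (h : compress a = a) : ∀ b ∈ a, b ≠ 0 := by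
  intro b hb
  rw [← h] at hb
  have := (List.destutter_sublist (R := (· ≠ ·)) _).subset hb
  simpa using (List.mem_filter.1 this).2

/-- Theorem 2.16: if `A` is subtracted centrally image partition
regular and `B` is a Milliken–Taylor matrix, then the diagonal sum `(A 0; 0 B)` is
image partition regular: for every finite coloring of `ℕ` there are `x, y ∈ ℕ^ω`
with all entries of `Ax` and all entries of `By` in one and the same color class. -/
theorem stmt_8 (A : ℕ → ℕ → ℚ) (B : ℕ → ℕ → ℕ)
    (hA : SubtractedCentrallyIPR A) (hB : MillikenTaylor B) :
    ∀ (r : ℕ) (c : ℕ+ → Fin r), ∃ (k : Fin r) (x y : ℕ → ℕ+),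
      entriesIn (mulVecQ A x) {n | c n = k} ∧
      (∀ i, ∃ n : ℕ+, c n = k ∧ (∑ᶠ j, B i j * (y j : ℕ)) = (n : ℕ)) := by

  classical
  intro r c
  obtain ⟨-, hrow, n, k, hk, ⟨u, F, hF, hrange⟩, hD⟩ := hA
  obtain ⟨-, a, hane, hac, hrows, -⟩ := hB
  have ha0 := compressed_ne_zero hac
  obtain ⟨l, e, hle⟩ : ∃ l e, a = l ++ [e] := ⟨_, _, (List.dropLast_append_getLast hane).symm⟩
  have he : 0 < e := Nat.pos_of_ne_zero (ha0 e (by simp [hle]))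
  obtain ⟨p', hp', hK⟩ := exists_minimal_idem
  obtain ⟨p, hp, f, hf, hpf⟩ := exists_divided hp' e he
  have hdv := idem_dvd hp' e he
  let Q : Fin r → ℕ → Prop := fun q t => ∃ m : ℕ+, c m = q ∧ t = (m : ℕ)
  obtain ⟨q, hq⟩ : ∃ q, ItLim p (Q q) a 0 := by
    apply acc_exists
    refine acc_mono ?_ a 0 (acc_pos p a ha0 0 fun h => absurd h hane)
    intro s hs
    exact ⟨c ⟨s, hs⟩, ⟨s, hs⟩, rfl, rfl⟩
  obtain ⟨y, hy⟩ := mt_exists hp hq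
  have hFp : ∀ P ∈ p, ∃ x : Fin k → ℕ, (∀ j, 0 < x j) ∧
      ∀ i, ∃ m ∈ P, ∑ j, F i j * (x j : ℚ) = ((m : ℕ+) : ℕ) := by
    intro P hP
    have h1 : ∀ᶠ m in (p' : Filter ℕ+), f m ∈ P := (hpf (fun m => m ∈ P)).1 hP
    obtain ⟨x, hx, hxi⟩ := claim_univ hF hp' hK e he {m | f m ∈ P ∧ e ∣ (m : ℕ)} (h1.and hdv)
    refine ⟨fun j => x j / e, fun j => Nat.div_pos (Nat.le_of_dvd (hx j).1 (hx j).2) he, ?_⟩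
    intro i
    obtain ⟨m, ⟨hm1, hm2⟩, hm⟩ := hxi i (Finset.mem_univ i)
    refine ⟨f m, hm1, ?_⟩
    have heq : (e : ℚ) ≠ 0 := by exact_mod_cast he.ne'
    apply mul_left_cancel₀ heq
    have h2 : (e : ℚ) * ((f m : ℕ) : ℚ) = ((m : ℕ) : ℚ) := by exact_mod_cast hf m hm2
    rw [h2, ← hm, Finset.mul_sum]
    apply Finset.sum_congr rfl
    intro j _
    have h3 : (e : ℚ) * ((x j / e : ℕ) : ℚ) = (x j : ℚ) := by
      exact_mod_cast Nat.mul_div_cancel' (hx j).2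
    rw [← h3]
    ring
  have hq2 : ItLim p (fun b => ItLim p (Q q) [e] b) a 0 := by
    rw [← acc_append, hle, List.append_assoc, acc_append]
    rw [hle, acc_append] at hq
    exact acc_mono (fun s hs => (acc_dup hp (Q q) e [] s).2 hs) l 0 hq
  obtain ⟨x1, hx1, hb⟩ := acc_image hFp _ a ha0 (fun _ => 0) (fun _ => hq2)
  replace hx1 := hx1 hane
  choose b hb1 hb2 using hb
  have hC : ∀ᶠ m : ℕ+ in (p' : Filter ℕ+), ∀ i : Fin u, Q q (b i + (m : ℕ)) := by
    rw [Filter.eventually_all]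
    intro i
    have h1 : ∀ᶠ z : ℕ+ in (p : Filter ℕ+), Q q (0 + b i + e * z) := hb2 i
    have h2 := (hpf _).1 h1
    filter_upwards [h2, hdv] with m hm hdm
    rwa [hf m hdm, zero_add] at hm
  obtain ⟨x2, hx2⟩ := hD {m | ∀ i : Fin u, Q q (b i + (m : ℕ))} ⟨p', hp', hK, hC⟩
  let x : ℕ → ℕ+ := fun j => if j < n then x2 j else
    if h : j - n < k then ⟨x1 ⟨j - n, h⟩, hx1 _⟩ else x2 (j - k)
  refine ⟨q, x, y, ?_, ?_⟩
  · intro i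
    obtain ⟨i', hi'⟩ : (fun t : Fin k => A i (n + (t : ℕ))) ∈ Set.range F := by
      rw [← hrange]
      exact ⟨i, rfl⟩
    obtain ⟨m, hm, hmi⟩ := hx2 i
    obtain ⟨m', hm'c, hm'⟩ := hm i'
    refine ⟨m', hm'c, ?_⟩
    rw [mulVec_split A n k x1 x2 x i (hrow i), hmi, ← hm', Nat.cast_add, ← hb1 i', hi']
    · intro j hj
      simp [x, hj]
    · intro t
      have h1 : ¬ (n + (t : ℕ) < n) := by omega
      simp [x]
    · intro j hj
      have h1 : ¬ (j + k < n) := by omega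
      have h2 : ¬ (j + k - n < k) := by omega
      simp only [x, if_neg h1, Nat.add_sub_cancel]
      exact dif_neg h2
  · intro i
    exact hy (B i) (hrows i)
end

section
/- Let A be an ω×ω monic segmented first entries matrix with entries from ω and let C be a central subset of (ℕ,·). Then there exists x ∈ ℕ^ω such that x^A ∈ C^ω, i.e., every entry of x^A lies in C. -/
/-- A left ideal of `(βℕ,·)`: a nonempty set `L` with `βℕ · L ⊆ L`. -/
def IsLeftIdealMul (L : Set (Ultrafilter ℕ+)) : Prop :=
  L.Nonempty ∧ ∀ p q, q ∈ L → umul p q ∈ L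

/-- A minimal left ideal of `(βℕ,·)`. -/
def IsMinimalLeftIdealMul (L : Set (Ultrafilter ℕ+)) : Prop :=
  IsLeftIdealMul L ∧ ∀ L', IsLeftIdealMul L' → L' ⊆ L → L' = L

/-- `K(βℕ,·)`, the union of all minimal left ideals of `(βℕ,·)`. -/
def KMul : Set (Ultrafilter ℕ+) :=
  {p | ∃ L, IsMinimalLeftIdealMul L ∧ p ∈ L}

/-- `C ⊆ ℕ` is central in `(ℕ,·)`: `C` belongs to some idempotent of `K(βℕ,·)`. -/
def IsCentralMul (C : Set ℕ+) : Prop :=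
  ∃ p : Ultrafilter ℕ+, umul p p = p ∧ p ∈ KMul ∧ C ∈ p

/-- `A i j` is the first (leftmost) nonzero entry of row `i`. -/
def FirstEntryAt {u v : ℕ} (A : Fin u → Fin v → ℚ) (i : Fin u) (j : Fin v) : Prop :=
  A i j ≠ 0 ∧ ∀ j' < j, A i j' = 0

/-- Definition 2.10(a): `A` is a first entries matrix. -/
def IsFirstEntries {u v : ℕ} (A : Fin u → Fin v → ℚ) : Prop :=
  (∀ i, ∃ j, A i j ≠ 0) ∧
  (∀ i j, FirstEntryAt A i j → 0 < A i j) ∧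
  (∀ i i' j, FirstEntryAt A i j → FirstEntryAt A i' j → A i j = A i' j)

/-- A first entries matrix is monic when all its first entries equal `1`. -/
def IsMonic {u v : ℕ} (A : Fin u → Fin v → ℚ) : Prop :=
  ∀ i j, FirstEntryAt A i j → A i j = 1

/-- Definition 2.10(b): `A` is a monic segmented first entries matrix: no row of `A`
is zero, `A` is row-finite, and there is an increasing sequence `α` with `α 0 = 0`
such that for each `n` the set of nonzero rows of the block of columns
`α n, …, α (n+1) - 1` is empty or is precisely the set of rows of a finite image
partition regular monic first entries matrix. -/
def MonicSegmentedFE (A : ℕ → ℕ → ℚ) : Prop :=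
  (∀ i, ∃ j, A i j ≠ 0) ∧ (∀ i, {j | A i j ≠ 0}.Finite) ∧
  ∃ α : ℕ → ℕ, α 0 = 0 ∧ StrictMono α ∧
    ∀ n, ∃ (u : ℕ) (F : Fin u → Fin (α (n+1) - α n) → ℚ),
      IPR F ∧ IsFirstEntries F ∧ IsMonic F ∧
      {row : Fin (α (n+1) - α n) → ℚ |
          row ≠ 0 ∧ ∃ i, row = fun t : Fin (α (n+1) - α n) => A i (α n + (t : ℕ))} = Set.range F

theorem mem_umul {p q : Ultrafilter ℕ+} {U : Set ℕ+} :
    U ∈ umul p q ↔ {x | {y | x * y ∈ U} ∈ q} ∈ p := Iff.rfl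

theorem umul_assoc' (p q r : Ultrafilter ℕ+) : umul (umul p q) r = umul p (umul q r) := by
  ext U
  simp only [mem_umul, Set.mem_ofPred_eq, mul_assoc]

/-- members of ultrafilters in `K` are piecewise syndetic -/
theorem pws {p : Ultrafilter ℕ+} (hp : p ∈ KMul) {P : Set ℕ+} (hP : P ∈ p) :
    ∃ G : Finset ℕ+, ∀ s : ℕ+, ∃ t ∈ G, {a | t * s * a ∈ P} ∈ p := by
  by_contra hcon
  push Not at hcon
  obtain ⟨L, ⟨⟨hne, hL⟩, hmin⟩, hpL⟩ := hp
  let B : ℕ+ → Set ℕ+ := fun t => {s | {a | t * s * a ∈ P} ∉ p}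
  have hfip : ∀ G : Finset ℕ+, (⋂ t ∈ G, B t).Nonempty := by
    intro G
    obtain ⟨s, hs⟩ := hcon G
    exact ⟨s, Set.mem_iInter₂.2 fun t ht => hs t ht⟩
  have hgen : (Filter.generate (Set.range B)).NeBot := by
    rw [Filter.generate_neBot_iff]
    intro T hT hTf
    choose g hg using hT
    have := hTf.to_subtype
    obtain ⟨s, hs⟩ := hfip (Set.finite_range fun V : T => g V.2).toFinset
    refine ⟨s, fun V hV => ?_⟩
    rw [← hg hV]
    refine Set.mem_iInter₂.1 hs _ ?_
    rw [Set.Finite.mem_toFinset]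
    exact ⟨⟨V, hV⟩, rfl⟩
  let r : Ultrafilter ℕ+ := Ultrafilter.of (Filter.generate (Set.range B))
  have hr : ∀ t, B t ∈ r := fun t =>
    Ultrafilter.of_le _ (Filter.mem_generate_of_mem (Set.mem_range_self t))
  let q := umul r p
  have hqL : q ∈ L := hL _ _ hpL
  have hLq : {s | ∃ r', s = umul r' q} = L := by
    apply hmin
    · refine ⟨⟨_, q, rfl⟩, ?_⟩
      rintro p' _ ⟨r', rfl⟩
      exact ⟨umul p' r', (umul_assoc' _ _ _).symm⟩
    · rintro _ ⟨r', rfl⟩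
      exact hL _ _ hqL
  obtain ⟨r', hr'⟩ : p ∈ {s | ∃ r', s = umul r' q} := by rw [hLq]; exact hpL
  rw [hr', mem_umul] at hP
  obtain ⟨t, ht⟩ := r'.nonempty_of_mem hP
  have ht : {y | t * y ∈ P} ∈ umul r p := ht
  rw [mem_umul] at ht
  obtain ⟨s, hs1, hs2⟩ := r.nonempty_of_mem (Filter.inter_mem ht (hr t))
  apply hs2
  simpa only [Set.mem_ofPred_eq, mul_assoc] using hs1

theorem ip_lemma {p : Ultrafilter ℕ+} (hid : umul p p = p) {C : Set ℕ+} (hC : C ∈ p)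
    (W : ℕ → Set (Finset ℕ+)) (hW : ∀ n, ∀ P ∈ p, ∃ V ∈ W n, (V : Set ℕ+) ⊆ P) :
    ∃ V : ℕ → Finset ℕ+, (∀ n, V n ∈ W n) ∧ ∀ H : Finset ℕ, H.Nonempty → ∀ f : ℕ → ℕ+,
      (∀ n ∈ H, f n ∈ V n) → ∏ n ∈ H, f n ∈ C := by
  have hstar : ∀ Q ∈ p, Q ∩ {x | {y | x * y ∈ Q} ∈ p} ∈ p := fun Q hQ => by
    refine Filter.inter_mem hQ ?_
    have h : Q ∈ umul p p := by rw [hid]; exact hQ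
    exact h
  choose V hVW hV using fun (n : ℕ) (Q : {Q : Set ℕ+ // Q ∈ p}) => hW n _ (hstar Q.1 Q.2)
  let step : ℕ → {Q : Set ℕ+ // Q ∈ p} → {Q : Set ℕ+ // Q ∈ p} := fun n Q =>
    ⟨Q.1 ∩ ⋂ v ∈ V n Q, {y | v * y ∈ Q.1}, by
      refine Filter.inter_mem Q.2 ?_
      exact (Filter.biInter_finset_mem _).2 fun v hv => (hV n Q hv).2⟩
  let Ps : ℕ → {Q : Set ℕ+ // Q ∈ p} := fun n => Nat.rec ⟨C, hC⟩ step n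
  have hsucc : ∀ n, Ps (n + 1) = step n (Ps n) := fun n => rfl
  have hanti : Antitone fun n => (Ps n).1 := antitone_nat_of_succ_le fun n => by
    rw [hsucc]; exact Set.inter_subset_left
  refine ⟨fun n => V n (Ps n), fun n => hVW _ _, ?_⟩
  have key : ∀ H : Finset ℕ, H.Nonempty → ∀ f : ℕ → ℕ+,
      (∀ n ∈ H, f n ∈ V n (Ps n)) → ∀ m, (∀ n ∈ H, m ≤ n) → ∏ n ∈ H, f n ∈ (Ps m).1 := by
    intro H
    induction H using Finset.induction_on_min with
    | empty => simp
    | insert a s ha ih =>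
      intro _ f hf m hm
      have hma : m ≤ a := hm a (by simp)
      refine hanti hma ?_
      have hfa := hf a (by simp)
      have hns : a ∉ s := fun h => lt_irrefl _ (ha a h)
      rw [Finset.prod_insert hns]
      rcases s.eq_empty_or_nonempty with rfl | hs
      · simpa using (hV a (Ps a) hfa).1
      · have h1 := ih hs f (fun n hn => hf n (by simp [hn])) (a + 1) (fun n hn => ha n hn)
        rw [hsucc] at h1
        have h2 := h1.2
        simp only [Set.mem_iInter] at h2
        exact h2 _ hfa
  intro H hH f hf
  exact key H hH f hf 0 (by simp)

theorem finite_lemma {p : Ultrafilter ℕ+} (hid : umul p p = p) (hp : p ∈ KMul) (v : ℕ) :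
    ∀ R : Set (Fin v → ℕ), R.Finite → (∀ r ∈ R, ∃ j, r j = 1 ∧ ∀ j' < j, r j' = 0) →
    ∀ P ∈ p, ∃ x : Fin v → ℕ+, ∀ r ∈ R, ∏ j, x j ^ r j ∈ P := by
  induction v with
  | zero =>
    intro R _ hR P _
    exact ⟨fun _ => 1, fun r hr => (hR r hr).choose.elim0⟩
  | succ v ih =>
    intro R hfin hR P hP
    let R0 : Set (Fin v → ℕ) := Fin.tail '' {r ∈ R | r 0 = 0}
    let R1 : Set (Fin v → ℕ) := Fin.tail '' {r ∈ R | r 0 = 1}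
    have hf0 : R0.Finite := (hfin.subset (Set.sep_subset _ _)).image _
    have hf1 : R1.Finite := (hfin.subset (Set.sep_subset _ _)).image _
    have hR0 : ∀ r ∈ R0, ∃ j, r j = 1 ∧ ∀ j' < j, r j' = 0 := by
      rintro _ ⟨r, ⟨hr, hr0⟩, rfl⟩
      obtain ⟨j, hj, hj'⟩ := hR r hr
      obtain ⟨k, rfl⟩ := Fin.exists_succ_eq.2 (show j ≠ 0 by rintro rfl; omega)
      exact ⟨k, hj, fun j' hjk => hj' j'.succ (by simpa using hjk)⟩
    have ih0 := ih R0 hf0 hR0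
    let W : ℕ → Set (Finset ℕ+) := fun _ =>
      {V | ∃ x : Fin v → ℕ+, ∀ r ∈ R0, ∏ j, x j ^ r j ∈ V}
    obtain ⟨V, hVW, hV⟩ := ip_lemma hid hP W (by
      intro n Q hQ
      obtain ⟨x, hx⟩ := ih0 Q hQ
      refine ⟨(hf0.image fun r : Fin v → ℕ => ∏ j, x j ^ r j).toFinset, ⟨x, ?_⟩, ?_⟩
      · intro r hr
        simp only [Set.Finite.mem_toFinset]
        exact Set.mem_image_of_mem _ hr
      · intro y hy
        simp only [Set.Finite.coe_toFinset] at hy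
        obtain ⟨r, hr, rfl⟩ := hy
        exact hx r hr)
    choose X hX using hVW
    obtain ⟨G, hG⟩ := pws hp hP
    have : Finite R1 := hf1
    obtain ⟨ι, _, hHJ⟩ := Combinatorics.Line.exists_mono_in_high_dimension R1 G
    let e : ι ≃ Fin (Fintype.card ι) := Fintype.equivFin ι
    let n : ι → ℕ := fun i => (e i : ℕ)
    have hn : Function.Injective n := fun a b h => e.injective (Fin.ext h)
    let y : R1 → ι → ℕ+ := fun r i => ∏ j, X (n i) j ^ r.1 j
    let E : (ι → R1) → ℕ+ := fun w => ∏ i, y (w i) i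
    choose c hcG hc using fun w => hG (E w)
    have : Finite (ι → R1) := inferInstance
    obtain ⟨a, ha⟩ := p.nonempty_of_mem (Filter.iInter_mem.2 hc)
    simp only [Set.mem_iInter, Set.mem_ofPred_eq] at ha
    obtain ⟨l, ⟨t, ht⟩⟩ := hHJ fun w => ⟨c w, hcG w⟩
    classical
    let H : Finset ι := Finset.univ.filter fun i => l.idxFun i = none
    have hHne : H.Nonempty := by
      obtain ⟨i, hi⟩ := l.proper
      exact ⟨i, by simp [H, hi]⟩
    let z : ι → ℕ+ := fun i => match l.idxFun i with
      | none => 1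
      | some r => y r i
    let x' : Fin v → ℕ+ := fun j => ∏ i ∈ H, X (n i) j
    have hx' : ∀ r : Fin v → ℕ, ∏ j, x' j ^ r j = ∏ i ∈ H, ∏ j, X (n i) j ^ r j := by
      intro r
      simp only [x', ← Finset.prod_pow]
      exact Finset.prod_comm
    have hE : ∀ r : R1, E (l r) = (∏ i, z i) * ∏ j, x' j ^ r.1 j := by
      intro r
      rw [hx', Finset.prod_filter, ← Finset.prod_mul_distrib]
      refine Finset.prod_congr rfl fun i _ => ?_
      rcases h : l.idxFun i with _ | s
      · simp [z, h, y, Combinatorics.Line.apply_def]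
      · simp [z, h, y, Combinatorics.Line.apply_def]
    refine ⟨Fin.cons (t.1 * a * ∏ i, z i) x', ?_⟩
    intro r hr
    rw [Fin.prod_univ_succ]
    simp only [Fin.cons_zero, Fin.cons_succ]
    have h01 : r 0 = 0 ∨ r 0 = 1 := by
      obtain ⟨j, hj, hj'⟩ := hR r hr
      rcases eq_or_ne j 0 with rfl | h
      · exact Or.inr hj
      · exact Or.inl (hj' 0 (Fin.pos_iff_ne_zero.2 h))
    rcases h01 with h | h
    · rw [h, pow_zero, one_mul]
      have hmem : Fin.tail r ∈ R0 := ⟨r, ⟨hr, h⟩, rfl⟩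
      have h1 := hx' (Fin.tail r)
      simp only [Fin.tail] at h1
      rw [h1]
      have h2 := hV (H.image n) (hHne.image n) (fun m => ∏ j, X m j ^ r j.succ)
        (fun m _ => hX m _ hmem)
      rwa [Finset.prod_image hn.injOn] at h2
    · have hmem : Fin.tail r ∈ R1 := ⟨r, ⟨hr, h⟩, rfl⟩
      have h1 := ha (l ⟨_, hmem⟩)
      have h2 : c (l ⟨_, hmem⟩) = t.1 := congrArg Subtype.val (ht ⟨_, hmem⟩)
      rw [h2, hE] at h1
      rw [h, pow_one]
      convert h1 using 1
      simp only [Fin.tail]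
      ac_rfl

theorem stmt_10 (A : ℕ → ℕ → ℕ)
    (hA : MonicSegmentedFE fun i j => (A i j : ℚ))
    (C : Set ℕ+) (hC : IsCentralMul C) :
    ∃ x : ℕ → ℕ+, ∀ i, (∏ᶠ j, (x j) ^ (A i j)) ∈ C := by
  obtain ⟨p, hid, hp, hCp⟩ := hC
  obtain ⟨hnz, hrf, α, hα0, hα, hF⟩ := hA
  let row : ∀ n, ℕ → Fin (α (n+1) - α n) → ℕ := fun n i t => A i (α n + t)
  let R : ∀ n, Set (Fin (α (n+1) - α n) → ℕ) := fun n => {r | r ≠ 0 ∧ ∃ i, r = row n i}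
  have hRF : ∀ n, (R n).Finite ∧ ∀ r ∈ R n, ∃ j, r j = 1 ∧ ∀ j' < j, r j' = 0 := by
    intro n
    obtain ⟨u, F, -, hFE, hmon, hset⟩ := hF n
    have hmem : ∀ r ∈ R n, (fun t => (r t : ℚ)) ∈ Set.range F := by
      rintro r ⟨h0, i, rfl⟩
      rw [← hset]
      refine ⟨fun h => h0 ?_, i, rfl⟩
      funext t
      simpa using congrFun h t
    constructor
    · refine Set.Finite.of_injOn (f := fun (r : Fin (α (n+1) - α n) → ℕ) t => (r t : ℚ))
        (fun r hr => hmem r hr) ?_ (Set.finite_range F)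
      intro r _ s _ h
      funext t
      simpa using congrFun h t
    · intro r hr
      obtain ⟨k, hk⟩ := hmem r hr
      have hk' : ∀ t, F k t = r t := fun t => congrFun hk t
      have hex : ∃ j, r j ≠ 0 := Function.ne_iff.1 hr.1
      let j := wellFounded_lt.min {j | r j ≠ 0} hex
      have hj : r j ≠ 0 := wellFounded_lt.min_mem {j | r j ≠ 0} hex
      have hj' : ∀ j' < j, r j' = 0 := fun j' h => by
        by_contra h2
        exact wellFounded_lt.not_lt_min {j | r j ≠ 0} h2 h
      have := hmon k j ⟨by rw [hk']; exact_mod_cast hj, fun j' h => by simp [hk', hj' j' h]⟩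
      rw [hk'] at this
      exact ⟨j, by exact_mod_cast this, hj'⟩
  let W : ℕ → Set (Finset ℕ+) := fun n =>
    {V | ∃ x : Fin (α (n+1) - α n) → ℕ+, ∀ r ∈ R n, ∏ j, x j ^ r j ∈ V}
  obtain ⟨V, hVW, hV⟩ := ip_lemma hid hCp W (by
      intro n Q hQ
      obtain ⟨x, hx⟩ := finite_lemma hid hp _ (R n) (hRF n).1 (hRF n).2 Q hQ
      refine ⟨((hRF n).1.image fun r => ∏ j, x j ^ r j).toFinset, ⟨x, ?_⟩, ?_⟩
      · intro r hr
        simp only [Set.Finite.mem_toFinset]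
        exact Set.mem_image_of_mem _ hr
      · intro y hy
        simp only [Set.Finite.coe_toFinset] at hy
        obtain ⟨r, hr, rfl⟩ := hy
        exact hx r hr)
  choose X hX using hVW
  have hblock : ∀ j, ∃ n, α n ≤ j ∧ j < α (n + 1) := by
    intro j
    induction j with
    | zero => exact ⟨0, by simp [hα0], by have := hα (show 0 < 0 + 1 by omega); omega⟩
    | succ j ih =>
      obtain ⟨n, h1, h2⟩ := ih
      rcases Nat.lt_or_ge (j + 1) (α (n + 1)) with h | h
      · exact ⟨n, by omega, h⟩
      · exact ⟨n + 1, h, by have := hα (show n + 1 < n + 1 + 1 by omega); omega⟩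
  choose b hb1 hb2 using hblock
  have hbu : ∀ n j, α n ≤ j → j < α (n + 1) → b j = n := by
    intro n j h1 h2
    have h3 := hα.lt_iff_lt.1 (lt_of_le_of_lt h1 (hb2 j))
    have h4 := hα.lt_iff_lt.1 (lt_of_le_of_lt (hb1 j) h2)
    omega
  let Y : ℕ → ℕ → ℕ+ := fun n t => if h : t < α (n+1) - α n then X n ⟨t, h⟩ else 1
  let x : ℕ → ℕ+ := fun j => Y (b j) (j - α (b j))
  have hx : ∀ n (t : Fin (α (n+1) - α n)), x (α n + t) = X n t := by
    intro n t
    have ht := t.2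
    have hbn := hbu n (α n + t) (by omega) (by omega)
    have h1 : x (α n + t) = Y n (α n + t - α n) := by
      change Y (b (α n + t)) (α n + t - α (b (α n + t))) = _
      rw [hbn]
    rw [h1, Nat.add_sub_cancel_left]
    simp [Y]
  refine ⟨x, fun i => ?_⟩
  let f : ℕ → ℕ+ := fun n => ∏ t, X n t ^ row n i t
  have hprod : ∀ N, ∏ j ∈ Finset.range (α N), x j ^ A i j = ∏ n ∈ Finset.range N, f n := by
    intro N
    induction N with
    | zero => simp [hα0]
    | succ N ih =>
      have hle : α N ≤ α (N + 1) := hα.monotone (by omega)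
      rw [Finset.prod_range_succ, ← ih, ← Finset.prod_range_mul_prod_Ico _ hle,
        Finset.prod_Ico_eq_prod_range]
      congr 1
      rw [Finset.prod_range]
      simp only [hx, f, row]
  have hrfi : {j | A i j ≠ 0}.Finite := by simpa using hrf i
  obtain ⟨M, hM⟩ := hrfi.bddAbove
  have hsub : ∀ j, A i j ≠ 0 → j < α (M + 1) := fun j hj => by
    have h1 : j ≤ M := hM hj
    have := hα.id_le (M + 1)
    simp only [id] at this
    omega
  rw [finprod_eq_prod_of_mulSupport_subset (s := Finset.range (α (M + 1))), hprod]
  · classical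
    have h1 : ∏ n ∈ Finset.range (M + 1), f n
        = ∏ n ∈ (Finset.range (M + 1)).filter (fun n => row n i ≠ 0), f n := by
      symm
      refine Finset.prod_subset (Finset.filter_subset _ _) ?_
      intro n hn hn'
      have : row n i = 0 := by
        by_contra h
        exact hn' (Finset.mem_filter.2 ⟨hn, h⟩)
      simp [f, this]
    rw [h1]
    refine hV _ ?_ f ?_
    · obtain ⟨j, hj⟩ := hnz i
      have hj : A i j ≠ 0 := by simpa using hj
      have hlt := hsub j hj
      refine ⟨b j, Finset.mem_filter.2 ⟨Finset.mem_range.2 ?_, fun h => hj ?_⟩⟩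
      · exact hα.lt_iff_lt.1 (lt_of_le_of_lt (hb1 j) hlt)
      · have h1 := hb1 j
        have h2 := hb2 j
        have := congrFun h ⟨j - α (b j), by omega⟩
        simpa [row, Nat.add_sub_cancel' h1] using this
    · intro n hn
      exact hX n _ ⟨(Finset.mem_filter.1 hn).2, i, rfl⟩
  · intro j hj
    simp only [Function.mem_mulSupport] at hj
    simp only [Finset.coe_range, Set.mem_Iio]
    exact hsub j fun h => hj (by simp [h])
end

section
/- Let A be an ω×ω monic segmented first entries matrix with entries from ω, let r ∈ ℕ, and let ℕ = E_1 ∪ … ∪ E_r. Then there exist i ∈ {1,…,r} and vectors x, y ∈ ℕ^ω such that all entries of Ax and all entries of y^A lie in E_i. -/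
attribute [local instance] Ultrafilter.mul Ultrafilter.semigroup

namespace MSFE

open Filter

theorem umap_mul {X S : Type*} [Monoid X] [Monoid S] (h : X →* S) (p q : Ultrafilter X) :
    (p * q).map h = p.map h * q.map h := by
  apply Ultrafilter.coe_inj.mp
  apply Filter.ext'
  intro P
  rw [Ultrafilter.eventually_mul]
  change (∀ᶠ m in ↑(p * q), P (h m)) ↔ ∀ᶠ m in (p : Filter X), ∀ᶠ m' in (q : Filter X), P (h m * h m')
  rw [Ultrafilter.eventually_mul]
  simp only [map_mul]

theorem umap_cont {X S : Type*} (h : X → S) :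
    Continuous (fun p : Ultrafilter X => p.map h) :=
  ultrafilterBasis_is_basis.continuous_iff.2 <| Set.forall_mem_range.mpr fun s ↦
    ultrafilter_isOpen_basic (h ⁻¹' s)

theorem umul_pure_one {S : Type*} [Monoid S] (p : Ultrafilter S) :
    p * (pure 1 : Ultrafilter S) = p := by
  apply Ultrafilter.coe_inj.mp
  apply Filter.ext'
  intro P
  rw [Ultrafilter.eventually_mul]
  simp

theorem pure_one_umul {S : Type*} [Monoid S] (p : Ultrafilter S) :
    (pure 1 : Ultrafilter S) * p = p := by
  apply Ultrafilter.coe_inj.mp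
  apply Filter.ext'
  intro P
  rw [Ultrafilter.eventually_mul]
  simp

/-- Idempotents minimal for the usual order of idempotents. -/
def MinIdem {S : Type*} [Monoid S] (q : Ultrafilter S) : Prop :=
  q * q = q ∧ ∀ f : Ultrafilter S, f * f = f → f * q = f → q * f = f → f = q

theorem exists_minIdem {S : Type*} [Monoid S] (L : Set (Ultrafilter S)) (hc : IsClosed L)
    (hn : L.Nonempty) (hl : ∀ (u : Ultrafilter S), ∀ p ∈ L, u * p ∈ L) :
    ∃ q ∈ L, MinIdem q := by
  let Z : Set (Set (Ultrafilter S)) :=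
    {N | IsClosed N ∧ N.Nonempty ∧ ∀ (u : Ultrafilter S), ∀ p ∈ N, u * p ∈ N}
  obtain ⟨N, hNL, hN⟩ : ∃ N, N ⊆ L ∧ Minimal (· ∈ Z) N := by
    apply zorn_superset_nonempty Z _ L ⟨hc, hn, hl⟩
    intro c hcs hch hcn
    refine ⟨⋂₀ c, ⟨isClosed_sInter fun t ht => (hcs ht).1, ?_, ?_⟩,
      fun s hs => Set.sInter_subset_of_mem hs⟩
    · have := hcn.coe_sort
      apply IsCompact.nonempty_sInter_of_directed_nonempty_isCompact_isClosed
      · exact IsChain.directedOn hch.symm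
      · exact fun U hU => (hcs hU).2.1
      · exact fun U hU => (hcs hU).1.isCompact
      · exact fun U hU => (hcs hU).1
    · intro u p hp t ht
      exact (hcs ht).2.2 u p (hp t ht)
  obtain ⟨Nc, Nn, Nl⟩ := hN.prop
  obtain ⟨q, hq, hqq⟩ := exists_idempotent_in_compact_subsemigroup
    (@Ultrafilter.continuous_mul_left S _) N Nn Nc.isCompact (fun x _ y hy => Nl x y hy)
  refine ⟨q, hNL hq, hqq, ?_⟩
  intro f hff hfq hqf
  have hfN : f ∈ N := hfq ▸ Nl f q hq
  have himg : (· * f) '' Set.univ = N := by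
    apply hN.eq_of_subset
    · refine ⟨(Ultrafilter.continuous_mul_left f).isClosedMap _ isClosed_univ,
        ⟨_, ⟨f, trivial, rfl⟩⟩, ?_⟩
      rintro u _ ⟨m, _, rfl⟩
      exact ⟨u * m, trivial, mul_assoc _ _ _⟩
    · rintro _ ⟨m, _, rfl⟩
      exact Nl _ _ hfN
  rw [← himg] at hq
  obtain ⟨u, _, hu⟩ := hq
  have hu' : u * f = q := hu
  rw [← hqf, ← hu', mul_assoc, hff]

theorem extend_step {S X : Type*} [CommMonoid S] [CommMonoid X] (q : Ultrafilter S)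
    (hq : MinIdem q) (H : Set (X →* S)) (σ : Ultrafilter X) (hσ : ∀ h ∈ H, σ.map h = q) :
    ∃ τ : Ultrafilter (S × X), (∀ h ∈ H, τ.map (fun z => h z.2) = q) ∧
      ∀ ψ : X →* S, τ.map (fun z => z.1 * ψ z.2) = q := by
  let hs : (X →* S) → (S × X →* S) := fun h => h.comp (MonoidHom.snd S X)
  let χ : (X →* S) → (S × X →* S) := fun ψ => MonoidHom.fst S X * ψ.comp (MonoidHom.snd S X)
  let G : Set (Ultrafilter (S × X)) := {τ | ∀ h ∈ H, τ.map (hs h) = q}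
  have Gc : IsClosed G := by
    have : G = ⋂ h ∈ H, {τ | τ.map (hs h) = q} := by ext; simp [G]
    rw [this]
    refine isClosed_biInter fun h _ => ?_
    exact isClosed_singleton.preimage (umap_cont (hs h))
  have Gmul : ∀ a ∈ G, ∀ b ∈ G, a * b ∈ G := by
    intro a ha b hb h hh
    rw [umap_mul, ha h hh, hb h hh, hq.1]
  have Gn : σ.map (MonoidHom.inr S X) ∈ G := by
    intro h hh
    rw [Ultrafilter.map_map]
    exact hσ h hh
  let q' : Ultrafilter (S × X) := q.map (MonoidHom.inl S X)
  have q'q' : q' * q' = q' := by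
    simp only [q']
    rw [← umap_mul, hq.1]
  have q'h : ∀ h, q'.map (hs h) = pure 1 := by
    intro h
    simp only [q']
    rw [Ultrafilter.map_map]
    have : (hs h ∘ MonoidHom.inl S X) = fun _ => (1 : S) := by
      funext s; simp [hs]
    rw [this]
    apply Ultrafilter.coe_inj.mp
    apply Filter.ext'
    intro P
    simp
  have q'χ : ∀ ψ, q'.map (χ ψ) = q := by
    intro ψ
    simp only [q']
    rw [Ultrafilter.map_map]
    have : (χ ψ ∘ MonoidHom.inl S X) = id := by
      funext s; simp [χ]
    rw [this, Ultrafilter.map_id]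
  have Gr : ∀ a ∈ G, a * q' ∈ G := by
    intro a ha h hh
    rw [umap_mul, ha h hh, q'h, umul_pure_one]
  have Gl : ∀ a ∈ G, q' * a ∈ G := by
    intro a ha h hh
    rw [umap_mul, ha h hh, q'h, pure_one_umul]
  obtain ⟨e, ⟨t, ht, hte⟩, hee⟩ := exists_idempotent_in_compact_subsemigroup
    (@Ultrafilter.continuous_mul_left (S × X) _) ((· * q') '' G) (Set.Nonempty.image _ ⟨_, Gn⟩)
    (Gc.isCompact.image (Ultrafilter.continuous_mul_left q')) (by
      rintro _ ⟨a, ha, rfl⟩ _ ⟨b, hb, rfl⟩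
      exact ⟨a * q' * b, Gmul _ (Gr _ ha) _ hb, mul_assoc _ _ _⟩)
  have hte' : t * q' = e := hte
  have heq : e * q' = e := by rw [← hte', mul_assoc, q'q']
  have heG : e ∈ G := hte' ▸ Gr t ht
  refine ⟨q' * e, Gl e heG, ?_⟩
  intro ψ
  change (q' * e).map (χ ψ) = q
  have h1 : (q' * e) * (q' * e) = q' * e := by
    rw [mul_assoc, ← mul_assoc e, heq, hee]
  have h2 : (q' * e) * q' = q' * e := by rw [mul_assoc, heq]
  have h3 : q' * (q' * e) = q' * e := by rw [← mul_assoc, q'q']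
  apply hq.2
  · rw [← umap_mul, h1]
  · conv_lhs => rw [← q'χ ψ]
    rw [← umap_mul, h2]
  · conv_lhs => rw [← q'χ ψ]
    rw [← umap_mul, h3]

/-- A row whose first nonzero entry exists and equals one. -/
def Mon {n : ℕ} (l : Fin n → ℕ) : Prop := ∃ i, l i = 1 ∧ ∀ j < i, l j = 0

/-- The monomial homomorphism. -/
def rowHom (S : Type*) [CommMonoid S] {n : ℕ} (l : Fin n → ℕ) : (Fin n → S) →* S where
  toFun y := ∏ j, y j ^ l j
  map_one' := by simp
  map_mul' := by intro x y; simp [mul_pow, Finset.prod_mul_distrib]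

theorem exists_block {S : Type*} [CommMonoid S] (q : Ultrafilter S) (hq : MinIdem q) (n : ℕ) :
    ∃ σ : Ultrafilter (Fin n → S), ∀ l : Fin n → ℕ, Mon l → σ.map (fun y => ∏ j, y j ^ l j) = q := by
  induction n with
  | zero => exact ⟨pure 1, fun l ⟨i, _⟩ => i.elim0⟩
  | succ n ih =>
    obtain ⟨σ, hσ⟩ := ih
    obtain ⟨τ, h1, h2⟩ := extend_step q hq {h | ∃ l : Fin n → ℕ, Mon l ∧ h = rowHom S l} σ (by
      rintro _ ⟨l, hl, rfl⟩
      exact hσ l hl)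
    refine ⟨τ.map (fun z => Fin.cons z.1 z.2), ?_⟩
    rintro l ⟨i, hi, hj⟩
    rw [Ultrafilter.map_map]
    have e : ((fun y : Fin (n+1) → S => ∏ j, y j ^ l j) ∘ fun z : S × (Fin n → S) =>
        (Fin.cons z.1 z.2 : Fin (n+1) → S)) = fun z => z.1 ^ l 0 * rowHom S (fun j => l j.succ) z.2 := by
      funext z
      simp [rowHom, Fin.prod_univ_succ]
    rw [e]
    induction i using Fin.cases with
    | zero =>
      simp only [hi, pow_one]
      exact h2 _
    | succ i =>
      have : l 0 = 0 := hj 0 (Fin.succ_pos i)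
      simp only [this, pow_zero, one_mul]
      exact h1 _ ⟨_, ⟨i, hi, fun j hji => hj _ (Fin.succ_lt_succ_iff.mpr hji)⟩, rfl⟩

theorem star_mem {S : Type*} [Monoid S] (q : Ultrafilter S) (hq : q * q = q) (B : Set S)
    (hB : B ∈ q) :
    {s | s ∈ B ∧ ∀ᶠ t in (q : Filter S), s * t ∈ B} ∈ q := by
  have h : ∀ᶠ s in (↑(q * q) : Filter S), s ∈ B := by rw [hq]; exact hB
  rw [Ultrafilter.eventually_mul] at h
  have hB' : ∀ᶠ s in (q : Filter S), s ∈ B := hB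
  exact hB'.and h

theorem star_step {S : Type*} [Monoid S] (q : Ultrafilter S) (hq : q * q = q) (B : Set S) (w : S)
    (hw : ∀ᶠ t in (q : Filter S), w * t ∈ B) :
    {t | w * t ∈ B ∧ ∀ᶠ t' in (q : Filter S), w * t * t' ∈ B} ∈ q := by
  have h : ∀ᶠ t in (↑(q * q) : Filter S), w * t ∈ B := by rw [hq]; exact hw
  rw [Ultrafilter.eventually_mul] at h
  simp only [← mul_assoc] at h
  exact hw.and h

theorem block_step {S : Type*} [CommMonoid S] (q : Ultrafilter S) (hq : MinIdem q) (B : Set S)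
    (hB : B ∈ q) (C : Set S) (hC : C = {s | s ∈ B ∧ ∀ᶠ t in (q : Filter S), s * t ∈ B})
    (d : ℕ) (R : Set (Fin d → ℕ)) (hR : R.Finite) (W : Set S) (hW : W.Finite) (hWC : W ⊆ C) :
    ∃ x : Fin d → S, (∀ j, x j ∈ B) ∧ ∀ l ∈ R, Mon l →
      (∏ j, x j ^ l j) ∈ C ∧ ∀ w ∈ W, w * (∏ j, x j ^ l j) ∈ C := by
  obtain ⟨σ, hσ⟩ := exists_block q hq d
  have key : ∀ l : Fin d → ℕ, Mon l → ∀ D ∈ q, ∀ᶠ x in (σ : Filter (Fin d → S)),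
      (∏ j, x j ^ l j) ∈ D := by
    intro l hl D hD
    rw [← hσ l hl] at hD
    exact hD
  have e1 : ∀ᶠ x in (σ : Filter (Fin d → S)), ∀ j, x j ∈ B := by
    rw [eventually_all]
    intro j
    have := key (Pi.single j 1) ⟨j, by simp, fun k hk => by simp [hk.ne]⟩ B hB
    filter_upwards [this] with x hx
    have e : ∏ k, x k ^ (Pi.single j 1 : Fin d → ℕ) k = x j := by
      rw [Finset.prod_eq_single j]
      · simp
      · intro b _ hb; simp [hb]
      · simp
    rwa [e] at hx
  have e2 : ∀ᶠ x in (σ : Filter (Fin d → S)), ∀ l ∈ R, Mon l →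
      (∏ j, x j ^ l j) ∈ C ∧ ∀ w ∈ W, w * (∏ j, x j ^ l j) ∈ C := by
    rw [eventually_all_finite hR]
    intro l _
    by_cases hl : Mon l
    · have a1 := key l hl C (hC ▸ star_mem q hq.1 B hB)
      have a2 : ∀ᶠ x in (σ : Filter (Fin d → S)), ∀ w ∈ W, w * (∏ j, x j ^ l j) ∈ C := by
        rw [eventually_all_finite hW]
        intro w hw
        have hwC := hWC hw
        rw [hC] at hwC
        have := key l hl _ (star_step q hq.1 B w hwC.2)
        filter_upwards [this] with x hx
        rw [hC]
        exact hx
      filter_upwards [a1, a2] with x h1 h2 _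
      exact ⟨h1, h2⟩
    · exact Eventually.of_forall fun x h => (hl h).elim
  exact (e1.and e2).exists

theorem seg {S : Type*} [CommMonoid S] (q : Ultrafilter S) (hq : MinIdem q) (B : Set S)
    (hB : B ∈ q) (A : ℕ → ℕ → ℕ) (α : ℕ → ℕ) (hα0 : α 0 = 0) (hα : StrictMono α)
    (hfin : ∀ n, {l : Fin (α (n+1) - α n) → ℕ | ∃ i, l = fun t : Fin (α (n+1) - α n) => A i (α n + t)}.Finite)
    (hmon : ∀ n i, (∀ t : Fin (α (n+1) - α n), A i (α n + t) = 0) ∨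
      Mon (fun t : Fin (α (n+1) - α n) => A i (α n + t))) :
    ∃ y : ℕ → S, (∀ j, y j ∈ B) ∧ ∀ i, (∃ j, A i j ≠ 0) → ∀ N, (∀ j, N ≤ j → A i j = 0) →
      ∏ j ∈ Finset.range N, y j ^ A i j ∈ B := by
  classical
  obtain ⟨C, hC⟩ : ∃ C : Set S, C = {s | s ∈ B ∧ ∀ᶠ t in (q : Filter S), s * t ∈ B} := ⟨_, rfl⟩
  let R : ∀ n, Set (Fin (α (n+1) - α n) → ℕ) := fun n => {l | ∃ i, l = fun t : Fin (α (n+1) - α n) => A i (α n + t)}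
  let St := {W : Set S // W.Finite ∧ W ⊆ C}
  have hst : ∀ (n : ℕ) (W : St), ∃ x : Fin (α (n+1) - α n) → S, (∀ j, x j ∈ B) ∧
      ∀ l ∈ R n, Mon l → (∏ j, x j ^ l j) ∈ C ∧ ∀ w ∈ W.1, w * (∏ j, x j ^ l j) ∈ C :=
    fun n W => block_step q hq B hB C hC _ (R n) (hfin n) W.1 W.2.1 W.2.2
  choose f hf1 hf2 using hst
  let P : ∀ n (W : St), Set S := fun n W =>
    (fun l => ∏ j, f n W j ^ l j) '' {l | l ∈ R n ∧ Mon l}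
  have hPfin : ∀ n W, (P n W).Finite := fun n W => ((hfin n).subset (fun l hl => hl.1)).image _
  let nxt : ∀ n (W : St), St := fun n W => ⟨W.1 ∪ P n W ∪ Set.image2 (· * ·) W.1 (P n W), by
    refine ⟨(W.2.1.union (hPfin n W)).union (W.2.1.image2 _ (hPfin n W)), ?_⟩
    rintro s ((hs | ⟨l, hl, rfl⟩) | ⟨w, hw, _, ⟨l, hl, rfl⟩, rfl⟩)
    · exact W.2.2 hs
    · exact (hf2 n W l hl.1 hl.2).1
    · exact (hf2 n W l hl.1 hl.2).2 w hw⟩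
  let Wn : ℕ → St := fun n => Nat.rec ⟨∅, Set.finite_empty, Set.empty_subset _⟩ nxt n
  have hWn : ∀ n, Wn (n+1) = nxt n (Wn n) := fun n => rfl
  have hex : ∀ j, ∃ n, α n ≤ j ∧ j < α (n+1) := by
    intro j
    have h1 : ∃ n, j < α n := ⟨j + 1, lt_of_lt_of_le (Nat.lt_succ_self j) hα.le_apply⟩
    have h2 := Nat.find_spec h1
    obtain ⟨m, hm⟩ : ∃ m, Nat.find h1 = m + 1 := by
      apply Nat.exists_eq_succ_of_ne_zero
      intro h0
      rw [h0, hα0] at h2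
      omega
    refine ⟨m, ?_, hm ▸ h2⟩
    have := Nat.find_min h1 (m := m) (by omega)
    omega
  choose s hs1 hs2 using hex
  have hsu : ∀ n j, α n ≤ j → j < α (n+1) → s j = n := by
    intro n j h1 h2
    have a1 := hα.lt_iff_lt.mp (lt_of_le_of_lt h1 (hs2 j))
    have a2 := hα.lt_iff_lt.mp (lt_of_le_of_lt (hs1 j) h2)
    omega
  let g : ∀ n, ℕ → S := fun n j =>
    if h : j - α n < α (n+1) - α n then f n (Wn n) ⟨j - α n, h⟩ else 1
  let y : ℕ → S := fun j => g (s j) j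
  have hy : ∀ n (t : Fin (α (n+1) - α n)), y (α n + t) = f n (Wn n) t := by
    intro n t
    have h1 : s (α n + t) = n := hsu n _ (by omega) (by omega)
    change g (s (α n + t)) (α n + t) = _
    rw [h1]
    simp only [g]
    have e : (⟨α n + (t : ℕ) - α n, by omega⟩ : Fin (α (n+1) - α n)) = t := by
      apply Fin.ext
      simp
    rw [dif_pos (by omega), e]
  refine ⟨y, ?_, ?_⟩
  · intro j
    have h1 := hs1 j
    have h2 := hs2 j
    have := hy (s j) ⟨j - α (s j), by omega⟩
    have e : α (s j) + (j - α (s j)) = j := by omega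
    simp only [e] at this
    rw [this]
    exact hf1 _ _ _
  · intro i hne N hN
    have main : ∀ n, (∀ j < α n, A i j = 0) ∨
        ∏ j ∈ Finset.range (α n), y j ^ A i j ∈ (Wn n).1 := by
      intro n
      induction n with
      | zero => left; intro j hj; omega
      | succ n ih =>
        have hlt : α n < α (n+1) := hα (Nat.lt_succ_self n)
        have hsplit : ∏ j ∈ Finset.range (α (n+1)), y j ^ A i j =
            (∏ j ∈ Finset.range (α n), y j ^ A i j) *
              ∏ t : Fin (α (n+1) - α n), f n (Wn n) t ^ A i (α n + t) := by
          conv_lhs => rw [show α (n+1) = α n + (α (n+1) - α n) by omega]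
          rw [Finset.prod_range_add]
          congr 1
          rw [Finset.prod_range]
          refine Finset.prod_congr rfl fun t _ => ?_
          rw [hy]
        rw [hsplit, hWn]
        rcases hmon n i with h0 | hm
        · have e1 : ∏ t : Fin (α (n+1) - α n), f n (Wn n) t ^ A i (α n + t) = 1 :=
            Finset.prod_eq_one fun t _ => by rw [h0, pow_zero]
          rw [e1, mul_one]
          rcases ih with h | h
          · left
            intro j hj
            by_cases hjn : j < α n
            · exact h j hjn
            · have := h0 ⟨j - α n, by omega⟩
              have e : α n + (j - α n) = j := by omega
              simpa only [e] using this
          · right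
            exact Or.inl (Or.inl h)
        · right
          have hP : ∏ t : Fin (α (n+1) - α n), f n (Wn n) t ^ A i (α n + t) ∈ P n (Wn n) :=
            ⟨_, ⟨⟨i, rfl⟩, hm⟩, rfl⟩
          rcases ih with h | h
          · have e1 : ∏ j ∈ Finset.range (α n), y j ^ A i j = 1 :=
              Finset.prod_eq_one fun j hj => by rw [h j (Finset.mem_range.mp hj), pow_zero]
            rw [e1, one_mul]
            exact Or.inl (Or.inr hP)
          · exact Or.inr ⟨_, h, _, hP, rfl⟩
    obtain ⟨j, hj⟩ := hne
    have hjN : j < N := by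
      by_contra h
      exact hj (hN j (by omega))
    have hNα : N ≤ α N := hα.le_apply
    rcases main N with h | h
    · exact (hj (h j (by omega))).elim
    · have e : ∏ j ∈ Finset.range N, y j ^ A i j = ∏ j ∈ Finset.range (α N), y j ^ A i j := by
        apply Finset.prod_subset
        · intro k hk
          simp only [Finset.mem_range] at *
          omega
        · intro k _ hk
          simp only [Finset.mem_range, not_lt] at hk
          rw [hN k hk, pow_zero]
      rw [e]
      have := (Wn N).2.2 h
      rw [hC] at this
      exact this.1

end MSFE

/-- Theorem 3.6: if `A` is an `ω×ω` monic segmented first entries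
matrix with entries from `ω` and `ℕ = E_1 ∪ … ∪ E_r`, then there are `i` and
`x, y ∈ ℕ^ω` such that all entries of `Ax` and all entries of `y^A`
(where `(y^A)_j = ∏_t y_t ^ A j t`) lie in `E_i`. -/
theorem stmt_11 (A : ℕ → ℕ → ℕ)
    (hA : MonicSegmentedFE fun i j => (A i j : ℚ))
    (r : ℕ) (E : Fin r → Set ℕ+) (hE : ∀ n : ℕ+, ∃ i, n ∈ E i) :
    ∃ (i : Fin r) (x y : ℕ → ℕ+),
      (∀ i' : ℕ, ∃ n ∈ E i, (∑ᶠ j, A i' j * (x j : ℕ)) = (n : ℕ)) ∧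
      (∀ i' : ℕ, (∏ᶠ j, (y j) ^ (A i' j)) ∈ E i) := by
  obtain ⟨hne, hfi, α, hα0, hα, hF⟩ := hA
  have hne' : ∀ i, ∃ j, A i j ≠ 0 := by
    intro i
    obtain ⟨j, hj⟩ := hne i
    exact ⟨j, by simpa using hj⟩
  have hfi' : ∀ i, ∃ N, ∀ j, N ≤ j → A i j = 0 := by
    intro i
    obtain ⟨b, hb⟩ := (hfi i).bddAbove
    refine ⟨b + 1, fun j hj => ?_⟩
    by_contra h
    have : j ≤ b := hb (by simpa using h)
    omega
  choose N hN using hfi'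
  have hfin : ∀ n, {l : Fin (α (n+1) - α n) → ℕ | ∃ i, l = fun t : Fin (α (n+1) - α n) => A i (α n + t)}.Finite := by
    intro n
    obtain ⟨u, F, -, -, -, hrow⟩ := hF n
    have h1 : (insert 0 (Set.range F)).Finite := (Set.finite_range F).insert 0
    have hinj : Function.Injective (fun (l : Fin (α (n+1) - α n) → ℕ) t => (l t : ℚ)) := by
      intro a b hab
      funext t
      have : (a t : ℚ) = (b t : ℚ) := congrFun hab t
      exact_mod_cast this
    refine (h1.preimage hinj.injOn).subset ?_
    rintro l ⟨i, rfl⟩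
    by_cases h0 : (fun t : Fin (α (n+1) - α n) => (A i (α n + t) : ℚ)) = 0
    · exact Or.inl h0
    · right
      rw [← hrow]
      exact ⟨h0, i, rfl⟩
  have hmon : ∀ n i, (∀ t : Fin (α (n+1) - α n), A i (α n + t) = 0) ∨
      MSFE.Mon (fun t : Fin (α (n+1) - α n) => A i (α n + t)) := by
    intro n i
    obtain ⟨u, F, -, hFE, hM, hrow⟩ := hF n
    by_cases h0 : (fun t : Fin (α (n+1) - α n) => (A i (α n + t) : ℚ)) = 0
    · left
      intro t
      have : (A i (α n + t) : ℚ) = 0 := congrFun h0 t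
      exact_mod_cast this
    · right
      have hm : (fun t : Fin (α (n+1) - α n) => (A i (α n + t) : ℚ)) ∈ Set.range F := by
        rw [← hrow]
        exact ⟨h0, i, rfl⟩
      obtain ⟨k, hk⟩ := hm
      have hex : ∃ t, F k t ≠ 0 := hFE.1 k
      obtain ⟨t, ht, hmin⟩ := WellFounded.has_min (wellFounded_lt (α := Fin (α (n+1) - α n)))
        {t | F k t ≠ 0} hex
      have hfe : FirstEntryAt F k t := ⟨ht, fun j hj => by
        by_contra h
        exact hmin j h hj⟩
      refine ⟨t, ?_, fun j hj => ?_⟩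
      · have := hM k t hfe
        rw [hk] at this
        beta_reduce at this ⊢
        exact_mod_cast this
      · have := hfe.2 j hj
        rw [hk] at this
        beta_reduce at this ⊢
        exact_mod_cast this
  have hsum : ∀ (x : ℕ → ℕ) i, (∑ᶠ j, A i j * x j) = ∑ j ∈ Finset.range (N i), A i j * x j := by
    intro x i
    apply finsum_eq_sum_of_support_subset
    intro j hj
    by_contra h
    simp only [Finset.coe_range, Set.mem_Iio, not_lt] at h
    exact hj (by simp [hN i j h])
  -- the additive side
  let L : Set (Ultrafilter ℕ+) :=
    {p | ∀ B ∈ p, ∃ x : ℕ → ℕ+, ∀ i, ∃ n ∈ B, (∑ᶠ j, A i j * (x j : ℕ)) = (n : ℕ)}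
  have Lc : IsClosed L := by
    have : L = ⋂ B ∈ {B : Set ℕ+ | ¬ ∃ x : ℕ → ℕ+, ∀ i, ∃ n ∈ B,
        (∑ᶠ j, A i j * (x j : ℕ)) = (n : ℕ)}, {p : Ultrafilter ℕ+ | B ∈ p}ᶜ := by
      ext p
      simp only [L, Set.mem_iInter]
      constructor
      · intro h B hB hBp
        exact hB (h B hBp)
      · intro h B hB
        by_contra hx
        exact h B hx hB
    rw [this]
    exact isClosed_biInter fun B _ => (ultrafilter_isOpen_basic B).isClosed_compl
  have Ll : ∀ u : Ultrafilter ℕ+, ∀ p ∈ L, u * p ∈ L := by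
    intro u p hp B hB
    have hB' : ∀ᶠ m in (↑(u * p) : Filter ℕ+), m ∈ B := hB
    rw [Ultrafilter.eventually_mul] at hB'
    obtain ⟨m, hm⟩ := hB'.exists
    obtain ⟨x, hx⟩ := hp _ hm
    refine ⟨fun j => m * x j, fun i => ?_⟩
    obtain ⟨n, hn, hxn⟩ := hx i
    refine ⟨m * n, hn, ?_⟩
    rw [hsum (fun j => (x j : ℕ))] at hxn
    rw [hsum (fun j => ((m * x j : ℕ+) : ℕ)), PNat.mul_coe, ← hxn, Finset.mul_sum]
    refine Finset.sum_congr rfl fun j _ => ?_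
    rw [PNat.mul_coe]
    ring
  have Ln : L.Nonempty := by
    let Q : Set (Multiplicative ℕ) := {s | 0 < s.toAdd}
    obtain ⟨q, hqQ, hq⟩ := MSFE.exists_minIdem {p : Ultrafilter (Multiplicative ℕ) | Q ∈ p}
      (ultrafilter_isClosed_basic Q) ⟨pure (Multiplicative.ofAdd 1), by
        change Q ∈ (pure _ : Ultrafilter _)
        rw [Ultrafilter.mem_pure]
        exact Nat.one_pos⟩ (by
        intro u p hp
        have hp' : ∀ᶠ m in (p : Filter (Multiplicative ℕ)), m ∈ Q := hp
        change ∀ᶠ m in (↑(u * p) : Filter (Multiplicative ℕ)), m ∈ Q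
        rw [Ultrafilter.eventually_mul]
        refine Filter.Eventually.of_forall fun m => ?_
        filter_upwards [hp'] with m' hm'
        change 0 < m.toAdd + m'.toAdd
        have : 0 < m'.toAdd := hm'
        omega)
    let g : Multiplicative ℕ → ℕ+ := fun s => Nat.toPNat' s.toAdd
    refine ⟨q.map g, fun B hB => ?_⟩
    have hB' : (g ⁻¹' B) ∩ Q ∈ q := Filter.inter_mem hB hqQ
    obtain ⟨y, hyB, hy⟩ := MSFE.seg q hq _ hB' A α hα0 hα hfin hmon
    refine ⟨fun j => ⟨(y j).toAdd, (hyB j).2⟩, fun i => ?_⟩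
    have h := hy i (hne' i) (N i) (hN i)
    refine ⟨_, h.1, ?_⟩
    refine (hsum (fun j => (y j).toAdd) i).trans ?_
    have h2 : 0 < (∏ j ∈ Finset.range (N i), y j ^ A i j).toAdd := h.2
    simp only [g]
    rw [Nat.toPNat'_coe, if_pos h2, toAdd_prod]
    refine Finset.sum_congr rfl fun j _ => ?_
    rw [toAdd_pow, smul_eq_mul]
  obtain ⟨q, hqL, hq⟩ := MSFE.exists_minIdem L Lc Ln Ll
  obtain ⟨k, hk⟩ : ∃ k, E k ∈ q := by
    have hU : (⋃ k ∈ (Set.univ : Set (Fin r)), E k) ∈ q := by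
      have : (⋃ k ∈ (Set.univ : Set (Fin r)), E k) = Set.univ := by
        ext n; simpa using hE n
      rw [this]
      exact Filter.univ_mem
    rw [Ultrafilter.finite_biUnion_mem_iff Set.finite_univ] at hU
    obtain ⟨k, -, hk⟩ := hU
    exact ⟨k, hk⟩
  obtain ⟨x, hx⟩ := hqL _ hk
  obtain ⟨y, -, hy⟩ := MSFE.seg q hq _ hk A α hα0 hα hfin hmon
  refine ⟨k, x, y, hx, fun i => ?_⟩
  rw [finprod_eq_prod_of_mulSupport_subset (s := Finset.range (N i))]
  · exact hy i (hne' i) (N i) (hN i)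
  · intro j hj
    by_contra h
    simp only [Finset.coe_range, Set.mem_Iio, not_lt] at h
    exact hj (by simp [hN i j h])
end

section
/- Let m ∈ ℕ and for each i ∈ {1,…,m} let A_i be a u_i×v_i image partition regular matrix with u_i, v_i ∈ ℕ. Let ℱ be the set of all finite image partition regular matrices with rational entries, let I = ⋂_{A ∈ ℱ} I(A), let p ∈ I, and let U ∈ p^m, where p^m denotes the m-fold product p·p·…·p in (βℕ,·). Then there exist x^(i) ∈ ℕ^{v_i} for 1 ≤ i ≤ m such that P(A_1x^(1), A_2x^(2), …, A_mx^(m)) ⊆ U. -/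
/-- `upow p m` is the `m`-fold product `p·p·…·p` in `(βℕ,·)` (for `m ≥ 1`). -/
def upow (p : Ultrafilter ℕ+) : ℕ → Ultrafilter ℕ+
  | 0 => p
  | 1 => p
  | n + 2 => umul (upow p (n + 1)) p

/-- The induction behind the theorem, on the number of factors. -/
theorem stmt_aux (p : Ultrafilter ℕ+)
    (hp : ∀ (u' v' : ℕ) (B : Fin u' → Fin v' → ℚ), IPR B → p ∈ ISet B) (k : ℕ) :
    ∀ (u v : Fin (k + 1) → ℕ)
    (A : ∀ i, Fin (u i) → Fin (v i) → ℚ) (_ : ∀ i, IPR (A i))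
    (U : Set ℕ+) (_ : U ∈ upow p (k + 1)),
    ∃ x : ∀ i, Fin (v i) → ℕ+,
      ∀ f : ∀ i, Fin (u i), ∃ n ∈ U,
        (∏ i, mulVecQ (A i) (x i) (f i)) = ((n : ℕ) : ℚ) := by
  induction k with
  | zero =>
    intro u v A hA U hU
    obtain ⟨x, hx⟩ := hp _ _ (A 0) (hA 0) U hU
    refine ⟨fun i => Fin.cases x (fun j => j.elim0) i, fun f => ?_⟩
    obtain ⟨n, hn, h⟩ := hx (f 0)
    exact ⟨n, hn, by simpa using h⟩
  | succ k ih =>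
    intro u v A hA U hU
    have hU' : {a : ℕ+ | {b : ℕ+ | a * b ∈ U} ∈ p} ∈ upow p (k + 1) := hU
    obtain ⟨x, hx⟩ := ih (fun i => u i.castSucc) (fun i => v i.castSucc)
      (fun i => A i.castSucc) (fun i => hA _) _ hU'
    choose g hg hgx using hx
    have hP : (⋂ f, {b : ℕ+ | g f * b ∈ U}) ∈ p := by
      have : (⋂ f, {b : ℕ+ | g f * b ∈ U}) ∈ (p : Filter ℕ+) :=
        Filter.iInter_mem.2 fun f => hg f
      exact this
    obtain ⟨y, hy⟩ := hp _ _ (A (Fin.last _)) (hA _) _ hP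
    refine ⟨fun i => Fin.lastCases (motive := fun i => Fin (v i) → ℕ+) y x i, fun f => ?_⟩
    obtain ⟨b, hb, h⟩ := hy (f (Fin.last _))
    refine ⟨g (fun i => f i.castSucc) * b, Set.mem_iInter.1 hb _, ?_⟩
    rw [Fin.prod_univ_castSucc]
    simp only [Fin.lastCases_last, Fin.lastCases_castSucc]
    rw [hgx, h]
    push_cast
    rfl

/-- Lemma 3.11: let `A 0, …, A (m-1)` be finite image partition
regular matrices, let `p ∈ I = ⋂_{A ∈ ℱ} I(A)` (`ℱ` the class of all finite image
partition regular matrices) and let `U ∈ p^m`.  Then there are vectors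
`x i ∈ ℕ^{v i}` such that `P(A 0 (x 0), …, A (m-1) (x (m-1))) ⊆ U`, i.e. every
product of one entry from each image `A i (x i)` is an element of `U`. -/
theorem stmt_13 (m : ℕ) (hm : 0 < m) (u v : Fin m → ℕ)
    (A : ∀ i, Fin (u i) → Fin (v i) → ℚ) (hA : ∀ i, IPR (A i))
    (p : Ultrafilter ℕ+)
    (hp : ∀ (u' v' : ℕ) (B : Fin u' → Fin v' → ℚ), IPR B → p ∈ ISet B)
    (U : Set ℕ+) (hU : U ∈ upow p m) :
    ∃ x : ∀ i, Fin (v i) → ℕ+,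
      ∀ f : ∀ i, Fin (u i), ∃ n ∈ U,
        (∏ i, mulVecQ (A i) (x i) (f i)) = ((n : ℕ) : ℚ) := by
  obtain ⟨k, rfl⟩ : ∃ k, m = k + 1 := ⟨m - 1, by omega⟩
  exact stmt_aux p hp k u v A hA U hU
end

section
/- Let r, m ∈ ℕ and for each i ∈ {1,…,m} let A_i be a u_i×v_i image partition regular matrix with u_i, v_i ∈ ℕ. If ℕ = E_1 ∪ … ∪ E_r, then there exist k ∈ {1,…,r} and x^(i) ∈ ℕ^{v_i} for 1 ≤ i ≤ m such that P(A_1x^(1), A_2x^(2), …, A_mx^(m)) ⊆ E_k. -/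
theorem ISet_nonempty_s15 {ι κ : Type} (A : ι → κ → ℚ) (hA : IPR A) : ∃ p, p ∈ ISet A := by
  classical
  let S : Set (Set ℕ+) := {Q | ¬ ∃ x : κ → ℕ+, entriesIn (mulVecQ A x) Qᶜ}
  have hne : (Filter.generate S).NeBot := by
    rw [Filter.generate_neBot_iff]
    intro t hts htf
    by_contra hemp
    rw [Set.not_nonempty_iff_eq_empty] at hemp
    have hcov : ∀ n : ℕ+, ∃ Q : t, n ∉ (Q : Set ℕ+) := by
      intro n
      by_contra! hn
      have : n ∈ ⋂₀ t := fun Q hQ => hn ⟨Q, hQ⟩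
      rw [hemp] at this
      exact this
    choose c hc using hcov
    haveI : Fintype t := htf.fintype
    let e := Fintype.equivFin t
    obtain ⟨k, x, hx⟩ := hA (Fintype.card t) (fun n => e (c n))
    refine hts (e.symm k).2 ⟨x, fun i => ?_⟩
    obtain ⟨n, hn, hxn⟩ := hx i
    refine ⟨n, ?_, hxn⟩
    have h1 : e.symm k = c n := by
      rw [Equiv.symm_apply_eq]
      exact hn.symm
    rw [h1]
    exact hc n
  refine ⟨Ultrafilter.of (Filter.generate S), fun P hP => ?_⟩
  by_contra hbad
  have h1 : Pᶜ ∈ Filter.generate S := by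
    refine Filter.mem_generate_of_mem ?_
    simpa only [S, Set.mem_setOf_eq, compl_compl] using hbad
  exact (Ultrafilter.compl_mem_iff_notMem.1 (Ultrafilter.of_le _ h1)) hP

theorem exists_prod_ultrafilter (m : ℕ) : ∀ (u v : Fin m → ℕ)
    (A : ∀ i, Fin (u i) → Fin (v i) → ℚ) (_ : ∀ i, IPR (A i)),
    ∃ q : Ultrafilter ℕ+, ∀ P ∈ q, ∃ x : ∀ i, Fin (v i) → ℕ+,
      ∀ f : ∀ i, Fin (u i), ∃ n ∈ P,
        (∏ i, mulVecQ (A i) (x i) (f i)) = ((n : ℕ) : ℚ) := by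
  induction m with
  | zero =>
    intro u v A hA
    refine ⟨pure 1, fun P hP => ⟨fun i => i.elim0, fun f => ⟨1, hP, by simp⟩⟩⟩
  | succ m ih =>
    intro u v A hA
    obtain ⟨q, hq⟩ := ih (fun i => u i.succ) (fun i => v i.succ) (fun i => A i.succ)
      (fun i => hA i.succ)
    obtain ⟨p, hp⟩ := ISet_nonempty_s15 (A 0) (hA 0)
    refine ⟨umul p q, fun P hP => ?_⟩
    have hP' : {a | {b | a * b ∈ P} ∈ q} ∈ p := hP
    obtain ⟨x0, hx0⟩ := hp _ hP'
    choose a ha hxa using hx0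
    have hint : (⋂ i, {b | a i * b ∈ P}) ∈ q := by
      have := (Filter.iInter_mem (f := (q : Filter ℕ+)) (s := fun i => {b | a i * b ∈ P})).2 ha
      exact this
    obtain ⟨x, hx⟩ := hq _ hint
    refine ⟨Fin.cons x0 x, fun f => ?_⟩
    obtain ⟨n, hn, hxn⟩ := hx (fun i => f i.succ)
    refine ⟨a (f 0) * n, Set.mem_iInter.1 hn (f 0), ?_⟩
    rw [Fin.prod_univ_succ]
    simp only [Fin.cons_zero, Fin.cons_succ]
    rw [hxn, hxa]
    push_cast
    rfl

/-- Corollary 3.13: let `A 0, …, A (m-1)` be finite image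
partition regular matrices and `ℕ = E_1 ∪ … ∪ E_r`.  Then there are `k` and
vectors `x i ∈ ℕ^{v i}` with `P(A 0 (x 0), …, A (m-1) (x (m-1))) ⊆ E_k`. -/
theorem stmt_15 (r m : ℕ) (hm : 0 < m) (u v : Fin m → ℕ)
    (A : ∀ i, Fin (u i) → Fin (v i) → ℚ) (hA : ∀ i, IPR (A i))
    (E : Fin r → Set ℕ+) (hE : ∀ n : ℕ+, ∃ i, n ∈ E i) :
    ∃ (k : Fin r) (x : ∀ i, Fin (v i) → ℕ+),
      ∀ f : ∀ i, Fin (u i), ∃ n ∈ E k,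
        (∏ i, mulVecQ (A i) (x i) (f i)) = ((n : ℕ) : ℚ) := by
  obtain ⟨q, hq⟩ := exists_prod_ultrafilter m u v A hA
  have hU : (⋃ i, E i) ∈ q := by
    have : (⋃ i, E i) = Set.univ := Set.eq_univ_of_forall fun n => Set.mem_iUnion.2 (hE n)
    rw [this]
    exact Filter.univ_mem
  have hk : ∃ k, E k ∈ q := by
    by_contra! hno
    have h1 : (⋂ i, (E i)ᶜ) ∈ (q : Filter ℕ+) :=
      Filter.iInter_mem.2 fun i => Ultrafilter.compl_mem_iff_notMem.2 (hno i)
    rw [← Set.compl_iUnion] at h1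
    exact Ultrafilter.compl_mem_iff_notMem.1 h1 hU
  obtain ⟨k, hk⟩ := hk
  obtain ⟨x, hx⟩ := hq _ hk
  exact ⟨k, x, hx⟩
end

section
/- Let {x_t}_{t=1}^∞ be a sequence in ℕ and let p ∈ βℕ satisfy p ∈ ⋂_{k=1}^∞ cl(FS({x_t}_{t=k}^∞)). Then for every n ∈ ℕ, PS_n({x_t}_{t=1}^∞) ∈ p^n, where p^n denotes the n-fold product p·p·…·p in (βℕ,·). -/
/-- `PSm m x` is `PS_m({x_t})`: all products `∏_{i=1}^m ∑_{t ∈ F_i} x_t` where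
`F_1, …, F_m` are finite nonempty subsets of the index set with
`max F_i < min F_{i+1}`. -/
def PSm (m : ℕ) (x : ℕ → ℕ+) : Set ℕ+ :=
  {z | ∃ F : Fin m → Finset ℕ,
    (∀ i, (F i).Nonempty) ∧
    (∀ i j : Fin m, i < j → ∀ a ∈ F i, ∀ b ∈ F j, a < b) ∧
    (z : ℕ) = ∏ i, ∑ t ∈ F i, (x t : ℕ)}

/-- `FSfrom x k` is `FS({x_t}_{t=k}^∞)`: all sums `∑_{t ∈ F} x_t` over finite
nonempty `F ⊆ {k, k+1, …}`. -/
def FSfrom (x : ℕ → ℕ+) (k : ℕ) : Set ℕ+ :=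
  {z | ∃ F : Finset ℕ, F.Nonempty ∧ (∀ t ∈ F, k ≤ t) ∧
    (z : ℕ) = ∑ t ∈ F, (x t : ℕ)}

/-- Theorem 3.16: if `{x_t}` is a sequence in `ℕ` and
`p ∈ ⋂_k cl(FS({x_t}_{t=k}^∞))` (i.e. `FS({x_t}_{t=k}^∞) ∈ p` for every `k`),
then for every `n ∈ ℕ`, `PS_n({x_t}) ∈ p^n`. -/
theorem stmt_18 (x : ℕ → ℕ+) (p : Ultrafilter ℕ+)
    (hp : ∀ k : ℕ, FSfrom x k ∈ p) :
    ∀ n : ℕ, 0 < n → PSm n x ∈ upow p n := by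
  intro n hn
  obtain ⟨m, rfl⟩ : ∃ m, n = m + 1 := ⟨n - 1, by omega⟩
  clear hn
  induction m with
  | zero =>
    refine Filter.mem_of_superset (hp 0) ?_
    rintro z ⟨F, hF, -, hz⟩
    refine ⟨fun _ => F, fun _ => hF, ?_, by simpa using hz⟩
    intro i j hij
    omega
  | succ m ih =>
    change {a | {b | a * b ∈ PSm (m + 1 + 1) x} ∈ p} ∈ upow p (m + 1)
    refine Filter.mem_of_superset ih ?_
    rintro a ⟨F, hF, hlt, ha⟩
    refine Filter.mem_of_superset (hp ((Finset.univ.biUnion F).sup id + 1)) ?_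
    rintro b ⟨G, hG, hk, hb⟩
    refine ⟨Fin.snoc (α := fun _ => Finset ℕ) F G, ?_, ?_, ?_⟩
    · intro i
      induction i using Fin.lastCases with
      | last => simpa using hG
      | cast i => simpa using hF i
    · intro i j hij s hs t ht
      induction i using Fin.lastCases with
      | last => exact absurd hij (not_lt.mpr (Fin.le_last j))
      | cast i =>
        rw [Fin.snoc_castSucc] at hs
        induction j using Fin.lastCases with
        | last =>
          rw [Fin.snoc_last] at ht
          have h1 := hk t ht
          have h2 : s ≤ (Finset.univ.biUnion F).sup id :=
            Finset.le_sup (f := id) (Finset.mem_biUnion.mpr ⟨i, Finset.mem_univ i, hs⟩)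
          omega
        | cast j =>
          rw [Fin.snoc_castSucc] at ht
          exact hlt i j (by simpa using hij) s hs t ht
    · rw [Fin.prod_univ_castSucc]
      simp only [Fin.snoc_castSucc, Fin.snoc_last, PNat.mul_coe]
      rw [ha, hb]
end
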